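/- Let G be a finitely generated group, γ₁,…,γ_n representatives of distinct conjugacy classes of indivisible elements of G with γᵢ not conjugate to γⱼ^{±1} for i ≠ j, and let G' = ⟨G, s₁,…,s_n | sᵢ^{kᵢ} = γᵢ⟩ with kᵢ ≥ 2. If H is any quotient of G' into which G embeds, then scott(G) ≥ scott(H) in the ordering on Scott complexities. -/

import Mathlib

/-- A group is freely indecomposable if in any free product decomposition one
of the factors is trivial. -/
def FreelyIndecomposable (G : Type) [Group G] : Prop :=
  ∀ (A B : Type) (_ : Group A) (_ : Group B),
    Nonempty (G ≃* Monoid.Coprod A B) → Subsingleton A ∨ Subsingleton B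

/-- `HasScott G a p` : `G` has a Grushko decomposition
`G ≅ G₁ * ⋯ * G_p * F_q` with each `Gᵢ` nontrivial, freely indecomposable and
not infinite cyclic, and `a = q - 1`. -/
def HasScott (G : Type) [Group G] (a : ℤ) (p : ℕ) : Prop :=
  ∃ (q : ℕ) (H : Fin p → Type) (_ : ∀ i, Group (H i)),
    a = (q : ℤ) - 1 ∧
    (∀ i, Nontrivial (H i)) ∧
    (∀ i, FreelyIndecomposable (H i)) ∧
    (∀ i, IsEmpty (H i ≃* Multiplicative ℤ)) ∧
    Nonempty (G ≃* Monoid.Coprod (Monoid.CoprodI H) (FreeGroup (Fin q)))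

/-- The order on Scott complexities `(q - 1, p)`. -/
def ScottLE (x y : ℤ × ℕ) : Prop :=
  x.1 < y.1 ∨ (x.1 = y.1 ∧ x.2 ≤ y.2)

/-- `x` is indivisible: it is not a proper power. -/
def Indivisible {G : Type} [Group G] (x : G) : Prop :=
  ∀ (u : G) (j : ℕ), 2 ≤ j → u ^ j ≠ x

/-- The group `G' = ⟨G, s₁, …, s_n | sᵢ^{kᵢ} = γᵢ⟩` obtained from `G` by
adjoining roots of the elements `γᵢ`. -/
abbrev AdjoinRoots (G : Type) [Group G] {nn : ℕ} (γ : Fin nn → G)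
    (k : Fin nn → ℕ) : Type :=
  (Monoid.Coprod G (FreeGroup (Fin nn))) ⧸
    Subgroup.normalClosure
      {x | ∃ i, x = (Monoid.Coprod.inr (FreeGroup.of i)) ^ (k i) *
        (Monoid.Coprod.inl (γ i))⁻¹}

/-- The natural map `G → G'`. -/
def adjoinRootsIncl (G : Type) [Group G] {nn : ℕ} (γ : Fin nn → G)
    (k : Fin nn → ℕ) : G →* AdjoinRoots G γ k :=
  (QuotientGroup.mk' _).comp Monoid.Coprod.inl

/-!
Adding the roots one at a time, we may assume that `H` is generated by a subgroup `K` and a root `s`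
of an element of `K` of infinite order. It suffices that `K` then splits with a complexity at least
that of any given splitting `H = B₁ * ⋯ * B_b * F_r`, because a Grushko decomposition has the
largest complexity among all splittings into nontrivial factors and a free group, by the same
argument with `s = 1`. By Kurosh, `K` is a free product of `p` nontrivial subgroups of conjugates of
the `Bⱼ` and a free group of rank `q`.

Homomorphisms from `H` to a rational vector space that kill the `Bⱼ` are determined by their values
on `K`, which gives `r ≤ q`. If `r = q`, we count cocycles with values in the regular representation
`ℓ²(H)`. A cocycle can be prescribed freely on a splitting, by coboundaries on the factors and by
arbitrary values on the free generators, and one that vanishes on `K` vanishes at `s`, because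
`s ^ k` has infinite order and so fixes no nonzero vector of `ℓ²(H)`. Comparing von Neumann
dimensions gives `b + r ≤ p + q + ∑ 1 / |Bⱼ|`, the sum being over the `Bⱼ` of which no conjugate
contains a factor of `K`. There is at most one such `Bⱼ`, as killing the other ones leaves a free
product of these `Bⱼ` and `F_r` that is generated by `r + 1` elements. So the error is at most
`1 / 2`, and `b ≤ p`.
-/

/-! ### Free splittings -/

section FreeSplitting

variable {G G' I Y : Type*} [Group G] [Group G']

/-- The subgroups `A i` and the elements `y t` exhibit `G` as the free product of the `A i` and of
the free group on the `y t`. -/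
def IsFreeSplitting (A : I → Subgroup G) (y : Y → G) : Prop :=
  Function.Bijective
    (Monoid.Coprod.lift (Monoid.CoprodI.lift fun i => (A i).subtype) (FreeGroup.lift y))

/-- `G` is the free product of the subgroups `A i`. -/
abbrev IsFreeProduct (A : I → Subgroup G) : Prop :=
  IsFreeSplitting A (Empty.elim : Empty → G)

theorem exists_finset_iSup_eq_top [Group.FG G] {A : I → Subgroup G} (hA : ⨆ i, A i = ⊤) :
    ∃ F : Finset I, ⨆ i ∈ F, A i = ⊤ := by
  classical
  obtain ⟨S, hS⟩ := Group.FG.out (G := G)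
  have hmono : Monotone fun F : Finset I => ⨆ i ∈ F, A i :=
    fun F F' hF => biSup_mono fun i hi => hF hi
  have hmem (g : G) : ∃ F : Finset I, g ∈ ⨆ i ∈ F, A i := by
    rw [← Subgroup.mem_iSup_of_directed hmono.directed_le, ← iSup_eq_iSup_finset, hA]
    exact Subgroup.mem_top g
  choose F hF using hmem
  refine ⟨S.biUnion F, top_unique (hS ▸ (Subgroup.closure_le _).2 fun g hg => ?_)⟩
  exact hmono (Finset.subset_biUnion_of_mem F hg) (hF g)

namespace IsFreeSplitting

variable {A : I → Subgroup G} {y : Y → G}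

theorem exists_hom (h : IsFreeSplitting A y) {X : Type*} [Group X] (φ : ∀ i, A i →* X)
    (f : Y → X) : ∃ Φ : G →* X, (∀ i (a : A i), Φ a = φ i a) ∧ ∀ t, Φ (y t) = f t := by
  let F := Monoid.Coprod.lift (Monoid.CoprodI.lift fun i => (A i).subtype) (FreeGroup.lift y)
  let e := MulEquiv.ofBijective F h
  have symm_factor (i) (a : A i) : e.symm a = .inl (.of a) :=
    have hF : F (.inl (.of a)) = a := by simp [F]
    e.symm_apply_eq.2 hF.symm
  have symm_gen (t) : e.symm (y t) = .inr (.of t) :=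
    have hF : F (.inr (.of t)) = y t := by simp [F]
    e.symm_apply_eq.2 hF.symm
  refine ⟨(Monoid.Coprod.lift (Monoid.CoprodI.lift φ) (FreeGroup.lift f)).comp
    e.symm.toMonoidHom, fun i a => ?_, fun t => ?_⟩
  · simp [symm_factor]
  · simp [symm_gen]

theorem iSup_sup_closure_range (h : IsFreeSplitting A y) :
    (⨆ i, A i) ⊔ Subgroup.closure (Set.range y) = ⊤ := by
  have hrange := MonoidHom.range_eq_top.2 h.surjective
  rwa [Monoid.Coprod.range_lift, Monoid.CoprodI.range_eq_iSup, FreeGroup.range_lift_eq_closure,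
    iSup_congr fun i => (A i).range_subtype] at hrange

theorem eq_top_of_le (h : IsFreeSplitting A y) {K : Subgroup G} (hA : ∀ i, A i ≤ K)
    (hy : ∀ t, y t ∈ K) : K = ⊤ :=
  top_unique <| h.iSup_sup_closure_range ▸
    sup_le (iSup_le hA) ((Subgroup.closure_le K).2 (Set.range_subset_iff.2 hy))

theorem hom_ext (h : IsFreeSplitting A y) {X : Type*} [Group X] {Φ Ψ : G →* X}
    (hA : ∀ i, ∀ a ∈ A i, Φ a = Ψ a) (hy : ∀ t, Φ (y t) = Ψ (y t)) : Φ = Ψ :=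
  MonoidHom.eq_of_eqOn_top fun g _ =>
    (h.eq_top_of_le (K := Φ.eqLocus Ψ) hA hy ▸ Subgroup.mem_top g : g ∈ Φ.eqLocus Ψ)

theorem of_exists_hom (hgen : (⨆ i, A i) ⊔ Subgroup.closure (Set.range y) = ⊤)
    (hΦ : ∃ Φ : G →* Monoid.Coprod (Monoid.CoprodI fun i => A i) (FreeGroup Y),
      (∀ i (a : A i), Φ a = .inl (.of a)) ∧ ∀ t, Φ (y t) = .inr (.of t)) :
    IsFreeSplitting A y := by
  obtain ⟨Φ, hA, hy⟩ := hΦ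
  constructor
  · refine Function.LeftInverse.injective (g := Φ) (DFunLike.congr_fun (?_ : Φ.comp _ = .id _))
    refine Monoid.Coprod.hom_ext (Monoid.CoprodI.ext_hom _ _ fun i => ?_)
      (FreeGroup.ext_hom _ _ fun t => ?_)
    · ext a
      simp [hA]
    · simp [hy]
  · rw [← MonoidHom.range_eq_top, Monoid.Coprod.range_lift, Monoid.CoprodI.range_eq_iSup,
      FreeGroup.range_lift_eq_closure, iSup_congr fun i => (A i).range_subtype, hgen]

theorem map (h : IsFreeSplitting A y) (e : G ≃* G') :
    IsFreeSplitting (fun i => (A i).map e.toMonoidHom) (e ∘ y) := by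
  refine of_exists_hom ?_ ?_
  · have hmap := congrArg (Subgroup.map e.toMonoidHom) h.iSup_sup_closure_range
    rwa [Subgroup.map_sup, Subgroup.map_iSup, MonoidHom.map_closure, ← Set.range_comp,
      Subgroup.map_top_of_surjective _ e.surjective] at hmap
  · obtain ⟨Φ, hA, hy⟩ := h.exists_hom
      (X := Monoid.Coprod (Monoid.CoprodI fun i => (A i).map e.toMonoidHom) (FreeGroup Y))
      (fun i => Monoid.Coprod.inl.comp
        (Monoid.CoprodI.of.comp (e.toMonoidHom.subgroupMap (A i)))) (fun t => .inr (.of t))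
    refine ⟨Φ.comp e.symm.toMonoidHom, ?_, fun t => ?_⟩
    · rintro i ⟨_, a, ha, rfl⟩
      calc Φ (e.symm (e a)) = Φ a := by rw [e.symm_apply_apply]
        _ = _ := hA i ⟨a, ha⟩
    · calc Φ (e.symm (e (y t))) = Φ (y t) := by rw [e.symm_apply_apply]
        _ = _ := hy t

theorem reindex (h : IsFreeSplitting A y) {I' Y' : Type*} (e : I' ≃ I) (f : Y' ≃ Y) :
    IsFreeSplitting (A ∘ e) (y ∘ f) := by
  refine of_exists_hom ?_ ?_
  · rw [f.surjective.range_comp y, ← h.iSup_sup_closure_range, ← e.iSup_comp (g := A)]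
    rfl
  · let X := Monoid.Coprod (Monoid.CoprodI fun i => (A ∘ e) i) (FreeGroup Y')
    let φ (k : I') : A (e k) →* X :=
      Monoid.Coprod.inl.comp (Monoid.CoprodI.of (M := fun i => (A ∘ e) i) (i := k))
    obtain ⟨Φ, hA, hy⟩ := h.exists_hom (X := X) (e.piCongrLeft (fun i => A i →* X) φ)
      (fun t => .inr (.of (f.symm t)))
    refine ⟨Φ, fun i a => ?_, fun t => by simp [hy]⟩
    exact (hA (e i) a).trans (by rw [e.piCongrLeft_apply_apply]; rfl)

theorem ofMulEquiv {M : I → Type*} [∀ i, Group (M i)]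
    (e : Monoid.Coprod (Monoid.CoprodI M) (FreeGroup Y) ≃* G) :
    IsFreeSplitting
      (fun i => (e.toMonoidHom.comp (Monoid.Coprod.inl.comp (Monoid.CoprodI.of (i := i)))).range)
      (fun t => e (.inr (.of t))) := by
  set j := fun i => e.toMonoidHom.comp (Monoid.Coprod.inl.comp (Monoid.CoprodI.of (i := i)))
  refine of_exists_hom ?_ ⟨(Monoid.Coprod.map
    (Monoid.CoprodI.lift fun i => Monoid.CoprodI.of.comp (j i).rangeRestrict)
    (MonoidHom.id (FreeGroup Y))).comp e.symm.toMonoidHom, ?_, fun t => ?_⟩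
  · refine top_unique ?_
    calc ⊤ = (e.toMonoidHom.comp (MonoidHom.id _)).range :=
          (MonoidHom.range_eq_top.2 e.surjective).symm
      _ = (Monoid.Coprod.lift (Monoid.CoprodI.lift j)
            (FreeGroup.lift fun t => e (.inr (.of t)))).range := by
          congr 1
          refine Monoid.Coprod.hom_ext (Monoid.CoprodI.ext_hom _ _ fun i => ?_)
            (FreeGroup.ext_hom _ _ fun t => ?_)
          · ext a
            simp [j]
          · simp
      _ ≤ _ := by
          rw [Monoid.Coprod.range_lift, Monoid.CoprodI.range_eq_iSup,
            FreeGroup.range_lift_eq_closure]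
  · rintro i ⟨_, b, rfl⟩
    simp only [j, MonoidHom.comp_apply, MulEquiv.coe_toMonoidHom, MulEquiv.symm_apply_apply,
      Monoid.Coprod.map_apply_inl, Monoid.CoprodI.lift_of]
    rfl
  · simp only [MonoidHom.comp_apply, MulEquiv.coe_toMonoidHom, MulEquiv.symm_apply_apply,
      Monoid.Coprod.map_apply_inr, MonoidHom.id_apply]

theorem not_isOfFinOrder (h : IsFreeSplitting A y) (t : Y) : ¬ IsOfFinOrder (y t) := by
  obtain ⟨Φ, -, hy⟩ := h.exists_hom (X := Multiplicative ℤ) (fun _ => 1) (fun _ => .ofAdd 1)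
  have hone : Multiplicative.ofAdd (1 : ℤ) ≠ 1 := by simp
  exact fun hfin => not_isOfFinOrder_of_isMulTorsionFree hone (hy t ▸ Φ.isOfFinOrder hfin)

theorem toFreeProduct (h : IsFreeSplitting A y) :
    IsFreeProduct (Sum.elim A fun t => Subgroup.zpowers (y t)) := by
  set C : I ⊕ Y → Subgroup G := Sum.elim A fun t => Subgroup.zpowers (y t)
  have hgen (t) : y t ∈ C (.inr t) := Subgroup.mem_zpowers (y t)
  refine of_exists_hom (top_unique <| h.iSup_sup_closure_range ▸ le_sup_of_le_left ?_) ?_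
  · refine sup_le (iSup_le fun i => le_iSup C (.inl i)) ?_
    rw [Subgroup.closure_le, Set.range_subset_iff]
    exact fun t => le_iSup C (.inr t) (hgen t)
  · obtain ⟨Φ, hA, hy⟩ := h.exists_hom
      (X := Monoid.Coprod (Monoid.CoprodI fun i => C i) (FreeGroup Empty))
      (fun i => Monoid.Coprod.inl.comp (Monoid.CoprodI.of (M := fun i => C i) (i := .inl i)))
      (fun t => .inl (.of (⟨y t, hgen t⟩ : C (.inr t))))
    refine ⟨Φ, ?_, fun t => t.elim⟩
    rintro (i | t) a
    · exact hA i a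
    · obtain ⟨_, n, rfl⟩ := a
      calc Φ (y t ^ n) = .inl (.of ((⟨y t, hgen t⟩ : C (.inr t)) ^ n)) := by
            rw [map_zpow, hy, ← map_zpow, ← map_zpow]
        _ = _ := rfl

theorem exists_of_isCyclic {T : Type*} {C : T → Subgroup G}
    (h : IsFreeSplitting (Sum.elim A C) y) (hcyclic : ∀ t, IsCyclic (C t))
    (hinf : ∀ t, Infinite (C t)) : ∃ g : T → G, IsFreeSplitting A (Sum.elim y g) := by
  choose g hg using fun t => isCyclic_iff_exists_zpowers_eq_top.1 (hcyclic t)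
  refine ⟨fun t => g t, of_exists_hom (h.eq_top_of_le ?_ fun t => ?_) ?_⟩
  · rintro (i | t)
    · exact le_sup_of_le_left (le_iSup A i)
    · have hC : C t = Subgroup.zpowers (g t : G) := by
        simpa [MonoidHom.map_zpowers, ← MonoidHom.range_eq_map] using
          (congrArg (Subgroup.map (C t).subtype) (hg t)).symm
      rw [Sum.elim_inr, hC, Subgroup.zpowers_le]
      exact Subgroup.mem_sup_right (Subgroup.subset_closure ⟨.inr t, rfl⟩)
  · exact Subgroup.mem_sup_right (Subgroup.subset_closure ⟨.inl t, rfl⟩)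
  · let X := Monoid.Coprod (Monoid.CoprodI fun i => A i) (FreeGroup (Y ⊕ T))
    let ψ (t) : C t →* X := (zpowersHom X (.inr (.of (.inr t)))).comp
      (intEquivOfZPowersEqTop (g t) (hg t)).symm.toMonoidHom
    have hψ (t) : ψ t (g t) = .inr (.of (.inr t)) := by
      simp only [ψ, MonoidHom.comp_apply, MulEquiv.coe_toMonoidHom,
        intEquivOfZPowersEqTop_symm_self, zpowersHom_apply, toAdd_ofAdd, zpow_one]
    obtain ⟨Φ, hA, hy⟩ := h.exists_hom (X := X)
      (Sum.rec (fun i => Monoid.Coprod.inl.comp (Monoid.CoprodI.of (M := fun i => A i))) ψ)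
      (fun t => .inr (.of (.inl t)))
    refine ⟨Φ, fun i a => hA (.inl i) a, ?_⟩
    rintro (t | t)
    · exact hy t
    · exact (hA (.inr t) (g t)).trans (hψ t)

theorem restrict_ne_bot (h : IsFreeSplitting A y) :
    IsFreeSplitting (fun i : {i // A i ≠ ⊥} => A i) y := by
  classical
  refine of_exists_hom (h.eq_top_of_le (fun i => ?_) fun t => ?_) ?_
  · by_cases hi : A i = ⊥
    · exact hi.trans_le bot_le
    · exact le_sup_of_le_left (le_iSup (fun i : {i // A i ≠ ⊥} => A i) ⟨i, hi⟩)
  · exact Subgroup.mem_sup_right (Subgroup.subset_closure ⟨t, rfl⟩)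
  · let X := Monoid.Coprod (Monoid.CoprodI fun i : {i // A i ≠ ⊥} => A i) (FreeGroup Y)
    obtain ⟨Φ, hA, hy⟩ := h.exists_hom (X := X) (fun i => if hi : A i ≠ ⊥ then
        Monoid.Coprod.inl.comp
          (Monoid.CoprodI.of (M := fun i : {i // A i ≠ ⊥} => A i) (i := ⟨i, hi⟩))
      else 1) (fun t => .inr (.of t))
    exact ⟨Φ, fun i a => (hA i a).trans (by rw [dif_pos i.2]; rfl), hy⟩

theorem exists_retraction (h : IsFreeSplitting A y) (i : I) :
    ∃ Φ : G →* A i, (∀ a : A i, Φ a = a) ∧ ∀ j ≠ i, ∀ a ∈ A j, Φ a = 1 := by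
  classical
  obtain ⟨Φ, hA, -⟩ := h.exists_hom
    (Function.update (fun j => (1 : A j →* A i)) i (MonoidHom.id (A i))) 1
  refine ⟨Φ, fun a => ?_, fun j hj a ha => ?_⟩
  · rw [hA, Function.update_self, MonoidHom.id_apply]
  · simpa [Function.update_of_ne hj] using hA j ⟨a, ha⟩

theorem finite_of_isFreeProduct [Group.FG G] (h : IsFreeProduct A) (hA : ∀ i, A i ≠ ⊥) :
    Finite I := by
  obtain ⟨F, hF⟩ := exists_finset_iSup_eq_top
    (by simpa [Set.range_eq_empty] using h.iSup_sup_closure_range)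
  refine Set.finite_univ_iff.1 (F.finite_toSet.subset fun i _ => by_contra fun hi => hA i ?_)
  obtain ⟨Φ, hretract, hkill⟩ := h.exists_retraction i
  have hker : Φ.ker = ⊤ := top_unique <| hF ▸ iSup₂_le fun j hj a ha =>
    hkill j (fun hji => hi (hji ▸ hj)) a ha
  refine (Subgroup.eq_bot_iff_forall _).2 fun a ha => ?_
  have hone : Φ a = 1 := Φ.mem_ker.1 (hker ▸ Subgroup.mem_top a)
  simpa using (hretract ⟨a, ha⟩).symm.trans hone

theorem finite [Group.FG G] (h : IsFreeSplitting A y) (hA : ∀ i, A i ≠ ⊥) :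
    Finite I ∧ Finite Y := by
  have hsum : Finite (I ⊕ Y) := finite_of_isFreeProduct h.toFreeProduct <| by
    rintro (i | t)
    · exact hA i
    · exact fun hbot => h.not_isOfFinOrder t
        (Subgroup.zpowers_eq_bot.1 hbot ▸ IsOfFinOrder.one)
  exact ⟨Finite.sum_left Y, Finite.sum_right I⟩

theorem nonempty_mulEquiv_coprod (h : IsFreeProduct A) (i : I) :
    Nonempty (G ≃* Monoid.Coprod (A i) (⨆ j ≠ i, A j : Subgroup G)) := by
  classical
  set K : Subgroup G := ⨆ j ≠ i, A j
  have hle (j) (hj : j ≠ i) : A j ≤ K := le_iSup₂_of_le j hj le_rfl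
  obtain ⟨Φ, hΦ, -⟩ := h.exists_hom (X := Monoid.Coprod (A i) K) (fun j => if hj : j = i then
      Monoid.Coprod.inl.comp (Subgroup.inclusion (congrArg A hj).le)
    else Monoid.Coprod.inr.comp (Subgroup.inclusion (hle j hj))) Empty.elim
  have hΦi (a : A i) : Φ a = .inl a := (hΦ i a).trans (by rw [dif_pos rfl]; rfl)
  have hΦj (j) (hj : j ≠ i) (a : A j) : Φ a = .inr (⟨a, hle j hj a.2⟩ : K) :=
    (hΦ j a).trans (by rw [dif_neg hj]; rfl)
  have hΦK : Φ.comp K.subtype = Monoid.Coprod.inr := by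
    have hK : K ≤ ((Φ.comp K.subtype).eqLocus Monoid.Coprod.inr).map K.subtype :=
      iSup₂_le fun j hj a ha => ⟨⟨a, hle j hj ha⟩, hΦj j hj ⟨a, ha⟩, rfl⟩
    ext a
    obtain ⟨b, hb, hba⟩ := hK a.2
    rwa [← Subtype.ext hba]
  refine ⟨MonoidHom.toMulEquiv Φ (Monoid.Coprod.lift (A i).subtype K.subtype)
    (h.hom_ext (fun j a ha => ?_) fun t => t.elim) (Monoid.Coprod.hom_ext ?_ ?_)⟩
  · obtain rfl | hj := eq_or_ne j i
    · simp [hΦi ⟨a, ha⟩]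
    · simp [hΦj j hj ⟨a, ha⟩]
  · ext a
    simp [hΦi]
  · ext a
    simpa using DFunLike.congr_fun hΦK a

end IsFreeSplitting

theorem FreelyIndecomposable.exists_eq_top {G : Type} [Group G] [Nontrivial G]
    (hG : FreelyIndecomposable G) {A : I → Subgroup G} (h : IsFreeProduct A) : ∃ i, A i = ⊤ := by
  have hgen : ⨆ i, A i = ⊤ := by simpa [Set.range_eq_empty] using h.iSup_sup_closure_range
  obtain ⟨i, hi⟩ : ∃ i, A i ≠ ⊥ := by
    by_contra! hbot
    exact bot_ne_top (iSup_eq_bot.2 hbot ▸ hgen)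
  refine ⟨i, ?_⟩
  rcases hG _ _ _ _ (IsFreeSplitting.nonempty_mulEquiv_coprod h i) with htriv | htriv
  · exact absurd ((A i).eq_bot_of_subsingleton) hi
  · have hrest : ⨆ j ≠ i, A j = ⊥ := Subgroup.eq_bot_of_subsingleton _
    refine top_unique (hgen ▸ iSup_le fun j => ?_)
    obtain rfl | hj := eq_or_ne j i
    · exact le_rfl
    · exact (le_iSup₂_of_le j hj le_rfl).trans (hrest.trans_le bot_le)

end FreeSplitting

/-! ### Crossed homomorphisms -/

section CrossedHom

variable {G N : Type*} [Group G] [Group N]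

/-- Crossed homomorphisms (nonabelian 1-cocycles) from `G` to a group `N` on which `G` acts
through `θ`. -/
def IsCrossedHom (θ : G →* MulAut N) (d : G → N) : Prop :=
  ∀ g h, d (g * h) = d g * θ g (d h)

namespace IsCrossedHom

variable {θ : G →* MulAut N} {d : G → N}

theorem map_one (hd : IsCrossedHom θ d) : d 1 = 1 := by
  simpa using hd 1 1

theorem map_inv (hd : IsCrossedHom θ d) (g : G) : d g⁻¹ = θ g⁻¹ (d g)⁻¹ := by
  have h := hd g⁻¹ g
  rw [inv_mul_cancel, hd.map_one] at h
  rw [_root_.map_inv, eq_inv_of_mul_eq_one_left h.symm]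

/-- The preimage under a crossed homomorphism of a subgroup stable under the action. -/
def comap (hd : IsCrossedHom θ d) (S : Subgroup N) (hS : ∀ g, ∀ n ∈ S, θ g n ∈ S) :
    Subgroup G where
  carrier := {g | d g ∈ S}
  one_mem' := by simp [hd.map_one]
  mul_mem' {g h} hg hh := by
    rw [Set.mem_ofPred_eq, hd g h]
    exact mul_mem hg (hS g _ hh)
  inv_mem' {g} hg := by
    rw [Set.mem_ofPred_eq, hd.map_inv]
    exact hS _ _ (inv_mem hg)

end IsCrossedHom

theorem IsFreeSplitting.exists_crossedHom {I Y : Type*} {A : I → Subgroup G} {y : Y → G}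
    (h : IsFreeSplitting A y) (θ : G →* MulAut N) (c : ∀ i, A i → N)
    (hc : ∀ i, IsCrossedHom (θ.comp (A i).subtype) (c i)) (w : Y → N) :
    ∃ d : G → N, IsCrossedHom θ d ∧ (∀ i (a : A i), d a = c i a) ∧ ∀ t, d (y t) = w t := by
  let ψ (i) : A i →* N ⋊[θ] G := MonoidHom.mk' (fun a => ⟨c i a, a⟩) fun a b =>
    SemidirectProduct.ext (hc i a b) rfl
  obtain ⟨Φ, hA, hy⟩ := h.exists_hom ψ fun t => ⟨w t, y t⟩
  have hright : SemidirectProduct.rightHom.comp Φ = MonoidHom.id G :=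
    h.hom_ext (fun i a ha => congrArg SemidirectProduct.right (hA i ⟨a, ha⟩))
      fun t => congrArg SemidirectProduct.right (hy t)
  refine ⟨fun g => (Φ g).left, fun a b => ?_, fun i a => congrArg SemidirectProduct.left (hA i a),
    fun t => congrArg SemidirectProduct.left (hy t)⟩
  have ha : (Φ a).right = a := DFunLike.congr_fun hright a
  change (Φ (a * b)).left = (Φ a).left * θ a (Φ b).left
  rw [map_mul, SemidirectProduct.mul_left, ha]

end CrossedHom

/-! ### The Kurosh subgroup theorem -/

section Kurosh

universe u v

variable {H : Type u} {J : Type v} [Group H]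

theorem exists_list_of_iSup_eq_top {B : J → Subgroup H} (hB : ⨆ j, B j = ⊤) (h : H) :
    ∃ l : List H, (∀ b ∈ l, ∃ j, b ∈ B j) ∧ l.prod = h := by
  have hh : h ∈ ⨆ j, B j := hB ▸ Subgroup.mem_top h
  induction hh using Subgroup.iSup_induction' with
  | hp j b hb => exact ⟨[b], by simpa using ⟨j, hb⟩, by simp⟩
  | h1 => exact ⟨[], by simp, rfl⟩
  | hmul x y _ _ hx hy =>
    obtain ⟨⟨l, hl, rfl⟩, ⟨l', hl', rfl⟩⟩ := hx, hy
    exact ⟨l ++ l', by grind, List.prod_append⟩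

theorem exists_descending_height {B : J → Subgroup H} (hB : ⨆ j, B j = ⊤) {Ω : Type*}
    [MulAction H Ω] [MulAction.IsPretransitive H Ω] (o : Ω) :
    ∃ d : Ω → ℕ, ∀ ω ≠ o, ∃ j, ∃ b ∈ B j, d (b • ω) < d ω := by
  classical
  have hword (ω : Ω) : ∃ n, ∃ l : List H, (∀ b ∈ l, ∃ j, b ∈ B j) ∧ l.length = n ∧
      l.prod • o = ω := by
    obtain ⟨h, hω⟩ := MulAction.exists_smul_eq H o ω
    obtain ⟨l, hl, rfl⟩ := exists_list_of_iSup_eq_top hB h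
    exact ⟨_, l, hl, rfl, hω⟩
  refine ⟨fun ω => Nat.find (hword ω), fun ω hω => ?_⟩
  obtain ⟨l, hl, hlen, hprod⟩ := Nat.find_spec (hword ω)
  cases l with
  | nil => exact absurd (by simpa using hprod.symm) hω
  | cons b l =>
    obtain ⟨j, hj⟩ := hl b List.mem_cons_self
    refine ⟨j, b⁻¹, inv_mem hj, ?_⟩
    calc Nat.find (hword (b⁻¹ • ω)) ≤ l.length := Nat.find_min' _
          ⟨l, fun x hx => hl x (List.mem_cons_of_mem b hx), rfl, by
            rw [eq_inv_smul_iff, ← mul_smul, ← List.prod_cons, hprod]⟩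
      _ < (b :: l).length := by simp
      _ = Nat.find (hword ω) := hlen

theorem exists_fun_of_descent {Ω M : Type*} [Monoid M] (o : Ω) (height : Ω → ℕ)
    (next : Ω → Ω) (hnext : ∀ ω ≠ o, height (next ω) < height ω) (s : Ω → M) :
    ∃ p : Ω → M, p o = 1 ∧ ∀ ω ≠ o, p ω = s ω * p (next ω) := by
  classical
  let step (ω : Ω) (rec : ∀ ω', height ω' < height ω → M) : M :=
    if hω : ω = o then 1 else s ω * rec (next ω) (hnext ω hω)
  refine ⟨(measure height).wf.fix step, ?_, fun ω hω => ?_⟩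
  · rw [WellFounded.fix_eq]
    exact dif_pos rfl
  · conv_lhs => rw [WellFounded.fix_eq]
    exact dif_neg hω

/-- Coset representatives adapted to a family of subgroups `B j` generating `H`: `base j` picks a
point in each `B j`-orbit on `H ⧸ G`, `trans j ω ∈ B j` carries `base j ω` to `ω`, and the
representative `rep ω` is obtained from that of a lower coset `base j ω` by multiplying by
`trans j ω`. -/
structure SchreierSystem (B : J → Subgroup H) (G : Subgroup H) where
  base : J → H ⧸ G → H ⧸ G
  trans : J → H ⧸ G → H
  rep : H ⧸ G → H
  height : H ⧸ G → ℕ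
  base_smul : ∀ {j b}, b ∈ B j → ∀ ω, base j (b • ω) = base j ω
  trans_mem : ∀ j ω, trans j ω ∈ B j
  trans_smul_base : ∀ j ω, trans j ω • base j ω = ω
  trans_eq_one : ∀ {j ω}, base j ω = ω → trans j ω = 1
  rep_one : rep ((1 : H) : H ⧸ G) = 1
  exists_rep_eq : ∀ ω ≠ ((1 : H) : H ⧸ G),
    ∃ j, height (base j ω) < height ω ∧ rep ω = trans j ω * rep (base j ω)

namespace SchreierSystem

variable {B : J → Subgroup H} {G : Subgroup H}

theorem nonempty_of_iSup_eq_top (hB : ⨆ j, B j = ⊤) (G : Subgroup H) :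
    Nonempty (SchreierSystem B G) := by
  classical
  obtain ⟨d, hd⟩ := exists_descending_height hB ((1 : H) : H ⧸ G)
  let orbit (j : J) (ω : H ⧸ G) : Set (H ⧸ G) := MulAction.orbit (B j) ω
  let base (j : J) (ω : H ⧸ G) := Function.argminOn d (orbit j ω) (MulAction.nonempty_orbit ω)
  have base_smul {j b} (hb : b ∈ B j) (ω) : base j (b • ω) = base j ω := by
    have horbit : orbit j (b • ω) = orbit j ω := MulAction.orbit_smul (⟨b, hb⟩ : B j) ω
    simp only [base, horbit]
  have htrans (j ω) : ∃ b ∈ B j, b • base j ω = ω ∧ (base j ω = ω → b = 1) := by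
    by_cases hω : base j ω = ω
    · exact ⟨1, one_mem _, by simp [hω], fun _ => rfl⟩
    · obtain ⟨b, hb⟩ := MulAction.mem_orbit_symm.1
        (Function.argminOn_mem d (orbit j ω) (MulAction.nonempty_orbit ω))
      exact ⟨b, b.2, hb, fun h => absurd h hω⟩
  choose trans trans_mem trans_smul trans_one using htrans
  have hnext (ω : H ⧸ G) : ∃ (ω' : H ⧸ G) (s : H), ω ≠ ((1 : H) : H ⧸ G) →
      d ω' < d ω ∧ ∃ j, ω' = base j ω ∧ s = trans j ω := by
    by_cases hω : ω = ((1 : H) : H ⧸ G)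
    · exact ⟨ω, 1, fun h => absurd hω h⟩
    · obtain ⟨j, b, hb, hlt⟩ := hd ω hω
      have hmin : d (base j ω) ≤ d (b • ω) := Function.argminOn_le d (orbit j ω) ⟨⟨b, hb⟩, rfl⟩
      exact ⟨base j ω, trans j ω, fun _ => ⟨hmin.trans_lt hlt, j, rfl, rfl⟩⟩
  choose next s hnext using hnext
  obtain ⟨rep, rep_one, rep_eq⟩ := exists_fun_of_descent ((1 : H) : H ⧸ G) d next
    (fun ω hω => (hnext ω hω).1) s
  refine ⟨⟨base, trans, rep, d, base_smul, trans_mem, trans_smul, trans_one _ _, rep_one,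
    fun ω hω => ?_⟩⟩
  obtain ⟨hlt, j, hbase, hs⟩ := hnext ω hω
  exact ⟨j, hbase ▸ hlt, by rw [rep_eq ω hω, hs, hbase]⟩

variable (D : SchreierSystem B G)

theorem induction {P : H ⧸ G → Prop} (one : P ((1 : H) : H ⧸ G))
    (step : ∀ j ω, D.rep ω = D.trans j ω * D.rep (D.base j ω) → P (D.base j ω) → P ω)
    (ω : H ⧸ G) : P ω := by
  induction ω using (measure D.height).wf.induction with
  | _ ω ih =>
    by_cases hω : ω = ((1 : H) : H ⧸ G)
    · exact hω ▸ one
    · obtain ⟨j, hlt, hrep⟩ := D.exists_rep_eq ω hω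
      exact step j ω hrep (ih _ hlt)

theorem rep_smul_one (ω : H ⧸ G) : D.rep ω • ((1 : H) : H ⧸ G) = ω := by
  induction ω using D.induction with
  | one => rw [D.rep_one, one_smul]
  | step j ω hrep ih => rw [hrep, mul_smul, ih, D.trans_smul_base]

theorem base_base (j : J) (ω : H ⧸ G) : D.base j (D.base j ω) = D.base j ω := by
  conv_rhs => rw [← D.trans_smul_base j ω]
  rw [D.base_smul (D.trans_mem j ω)]

theorem inv_trans_smul (j : J) (ω : H ⧸ G) : (D.trans j ω)⁻¹ • ω = D.base j ω := by
  rw [inv_smul_eq_iff, D.trans_smul_base]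

theorem mem_of_smul_one {h : H} (hh : h • ((1 : H) : H ⧸ G) = ((1 : H) : H ⧸ G)) : h ∈ G := by
  rw [MulAction.Quotient.smul_coe, smul_eq_mul, mul_one, eq_comm, QuotientGroup.eq] at hh
  simpa using hh

theorem smul_one_of_mem {h : H} (hh : h ∈ G) : h • ((1 : H) : H ⧸ G) = ((1 : H) : H ⧸ G) := by
  rw [MulAction.Quotient.smul_coe, smul_eq_mul, mul_one, eq_comm, QuotientGroup.eq]
  simpa using hh

/-- The Schreier generator of `G` attached to the edge of the coset graph labelled `h` and ending
at `ω`. -/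
def schreier (h : H) (ω : H ⧸ G) : G :=
  ⟨(D.rep ω)⁻¹ * h * D.rep (h⁻¹ • ω), mem_of_smul_one <| by
    rw [mul_smul, mul_smul, D.rep_smul_one, smul_inv_smul, inv_smul_eq_iff, D.rep_smul_one]⟩

theorem coe_schreier (h : H) (ω : H ⧸ G) :
    (D.schreier h ω : H) = (D.rep ω)⁻¹ * h * D.rep (h⁻¹ • ω) :=
  rfl

theorem isCrossedHom_schreier : IsCrossedHom mulAutArrow D.schreier := by
  refine fun g h => funext fun ω => Subtype.ext ?_
  change (D.rep ω)⁻¹ * (g * h) * D.rep ((g * h)⁻¹ • ω) =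
    (D.rep ω)⁻¹ * g * D.rep (g⁻¹ • ω) * ((D.rep (g⁻¹ • ω))⁻¹ * h * D.rep (h⁻¹ • g⁻¹ • ω))
  rw [mul_inv_rev, mul_smul]
  group

theorem schreier_mul (g h : H) (ω : H ⧸ G) :
    D.schreier (g * h) ω = D.schreier g ω * D.schreier h (g⁻¹ • ω) :=
  congrFun (D.isCrossedHom_schreier g h) ω

theorem schreier_one_coset (g : G) : D.schreier g ((1 : H) : H ⧸ G) = g := by
  ext
  simp [coe_schreier, smul_one_of_mem (inv_mem g.2), D.rep_one]

/-- The Schreier generator of the edge from `base j ω` to `ω` labelled by `trans j ω`. -/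
def edge (j : J) (ω : H ⧸ G) : G :=
  D.schreier (D.trans j ω) ω

theorem edge_eq_one_iff {j : J} {ω : H ⧸ G} :
    D.edge j ω = 1 ↔ D.rep ω = D.trans j ω * D.rep (D.base j ω) := by
  rw [edge, Subtype.ext_iff, coe_schreier, Subgroup.coe_one, inv_trans_smul, mul_assoc,
    inv_mul_eq_one]

theorem edge_eq_one_of_base_eq {j : J} {ω : H ⧸ G} (hω : D.base j ω = ω) : D.edge j ω = 1 := by
  rw [edge_eq_one_iff, D.trans_eq_one hω, hω, one_mul]

/-- The Schreier generator of `b` at `ω`, made into a loop at `base j ω` by means of the edges. -/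
def loop (j : J) (b : H) (ω : H ⧸ G) : G :=
  (D.edge j ω)⁻¹ * D.schreier b ω * D.edge j (b⁻¹ • ω)

theorem loop_mul (j : J) (b c : H) (ω : H ⧸ G) :
    D.loop j (b * c) ω = D.loop j b ω * D.loop j c (b⁻¹ • ω) := by
  rw [loop, loop, loop, schreier_mul, mul_inv_rev, mul_smul]
  group

theorem loop_trans (j : J) (ω : H ⧸ G) : D.loop j (D.trans j ω) ω = 1 := by
  rw [loop, inv_trans_smul, D.edge_eq_one_of_base_eq (D.base_base j ω), edge, inv_mul_cancel,
    one_mul]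

/-- The indices `(j, ω)` of the `B j`-orbits on `H ⧸ G`, each represented by its base point. -/
abbrev FactorIndex : Type _ := {x : J × (H ⧸ G) // D.base x.1 x.2 = x.2}

/-- The indices of the nontrivial edges. -/
abbrev EdgeIndex : Type _ := {x : J × (H ⧸ G) // D.edge x.1 x.2 ≠ 1}

/-- The index of the `B j`-orbit of `ω`. -/
abbrev orbitIndex (j : J) (ω : H ⧸ G) : D.FactorIndex := ⟨(j, D.base j ω), D.base_base j ω⟩

/-- The intersection of `G` with the conjugate of `B j` by the representative of `ω`. -/
def factor (x : D.FactorIndex) : Subgroup G :=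
  ((B x.1.1).comap (MulAut.conj (D.rep x.1.2)).toMonoidHom).subgroupOf G

theorem mem_factor {x : D.FactorIndex} {a : G} :
    a ∈ D.factor x ↔ D.rep x.1.2 * a * (D.rep x.1.2)⁻¹ ∈ B x.1.1 := by
  simp [factor, Subgroup.mem_subgroupOf]

theorem loop_mem_factor {j : J} {b : H} (hb : b ∈ B j) (ω : H ⧸ G) :
    D.loop j b ω ∈ D.factor (D.orbitIndex j ω) := by
  have hconj : D.rep (D.base j ω) * D.loop j b ω * (D.rep (D.base j ω))⁻¹ =
      (D.trans j ω)⁻¹ * b * D.trans j (b⁻¹ • ω) := by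
    simp only [loop, edge, coe_schreier, Subgroup.coe_mul, Subgroup.coe_inv, inv_trans_smul,
      D.base_smul (inv_mem hb)]
    group
  rw [mem_factor, hconj]
  exact mul_mem (mul_mem (inv_mem (D.trans_mem j ω)) hb) (D.trans_mem _ _)

theorem inv_conj_rep_smul (ω : H ⧸ G) (a : G) : (D.rep ω * a * (D.rep ω)⁻¹)⁻¹ • ω = ω := by
  have hω : (D.rep ω)⁻¹ • ω = ((1 : H) : H ⧸ G) := by rw [inv_smul_eq_iff, D.rep_smul_one]
  simp only [mul_inv_rev, inv_inv, mul_smul, hω, smul_one_of_mem (inv_mem a.2), D.rep_smul_one]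

theorem schreier_conj_rep (ω : H ⧸ G) (a : G) :
    D.schreier (D.rep ω * a * (D.rep ω)⁻¹) ω = a := by
  ext
  rw [coe_schreier, inv_conj_rep_smul]
  group

theorem iSup_factor_sup_closure_edges (hB : ⨆ j, B j = ⊤) :
    (⨆ x, D.factor x) ⊔ Subgroup.closure (Set.range fun x : D.EdgeIndex => D.edge x.1.1 x.1.2)
      = ⊤ := by
  set K := (⨆ x, D.factor x) ⊔
    Subgroup.closure (Set.range fun x : D.EdgeIndex => D.edge x.1.1 x.1.2)
  have edge_mem (j ω) : D.edge j ω ∈ K := by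
    by_cases hedge : D.edge j ω = 1
    · exact hedge ▸ one_mem K
    · exact Subgroup.mem_sup_right (Subgroup.subset_closure ⟨⟨(j, ω), hedge⟩, rfl⟩)
  let L : Subgroup H := D.isCrossedHom_schreier.comap (Subgroup.pi Set.univ fun _ => K)
    fun g n hn ω _ => hn (g⁻¹ • ω) trivial
  have hL : L = ⊤ := top_unique <| hB ▸ iSup_le fun j b hb ω _ => by
    have hloop : D.loop j b ω ∈ K :=
      Subgroup.mem_sup_left (Subgroup.mem_iSup_of_mem _ (D.loop_mem_factor hb ω))
    rw [show D.schreier b ω = D.edge j ω * D.loop j b ω * (D.edge j (b⁻¹ • ω))⁻¹ by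
      simp [loop, mul_assoc]]
    exact mul_mem (mul_mem (edge_mem j ω) hloop) (inv_mem (edge_mem j _))
  refine top_unique fun g _ => ?_
  have hg : (g : H) ∈ L := hL ▸ Subgroup.mem_top _
  exact D.schreier_one_coset g ▸ hg ((1 : H) : H ⧸ G) trivial

variable {X : Type*} [Group X]

theorem exists_crossedHom (hB : IsFreeProduct B) (φ : ∀ x, D.factor x →* X)
    (z : J → H ⧸ G → X) :
    ∃ C : H → H ⧸ G → X, IsCrossedHom mulAutArrow C ∧ ∀ j b (hb : b ∈ B j) ω,
      C b ω = z j ω * φ (D.orbitIndex j ω) ⟨D.loop j b ω, D.loop_mem_factor hb ω⟩ *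
        (z j (b⁻¹ • ω))⁻¹ := by
  classical
  let ψ (x) : G → X := Function.extend Subtype.val (φ x) 1
  have hψ {x} {a : G} (ha : a ∈ D.factor x) : ψ x a = φ x ⟨a, ha⟩ :=
    Subtype.val_injective.extend_apply (φ x) 1 ⟨a, ha⟩
  have ψ_mul {x} {a b : G} (ha : a ∈ D.factor x) (hb : b ∈ D.factor x) :
      ψ x (a * b) = ψ x a * ψ x b := by
    rw [hψ ha, hψ hb, hψ (mul_mem ha hb), ← map_mul]
    rfl
  let c (j) (b : B j) (ω : H ⧸ G) : X :=
    z j ω * ψ (D.orbitIndex j ω) (D.loop j b ω) * (z j ((b : H)⁻¹ • ω))⁻¹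
  have hc (j) : IsCrossedHom (mulAutArrow.comp (B j).subtype) (c j) := by
    intro a b
    funext ω
    have horbit : D.orbitIndex j ((a : H)⁻¹ • ω) = D.orbitIndex j ω :=
      Subtype.ext (congrArg (Prod.mk j) (D.base_smul (inv_mem a.2) ω))
    change c j (a * b) ω = c j a ω * c j b ((a : H)⁻¹ • ω)
    simp only [c, horbit, Subgroup.coe_mul, loop_mul, mul_inv_rev, mul_smul]
    rw [ψ_mul (D.loop_mem_factor a.2 ω) (horbit ▸ D.loop_mem_factor b.2 ((a : H)⁻¹ • ω))]
    group
  obtain ⟨C, hC, hCB, -⟩ := hB.exists_crossedHom mulAutArrow c hc Empty.elim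
  exact ⟨C, hC, fun j b hb ω => by
    rw [hCB j ⟨b, hb⟩, ← hψ (D.loop_mem_factor hb ω)]⟩

theorem crossedHom_schreier {C : H → H ⧸ G → X} (hC : IsCrossedHom mulAutArrow C)
    (hedge : ∀ j ω, D.edge j ω = 1 → C (D.trans j ω) ω = 1) (h : H) (ω : H ⧸ G) :
    C (D.schreier h ω) ((1 : H) : H ⧸ G) = C h ω := by
  have hmul (g h ω) : C (g * h) ω = C g ω * C h (g⁻¹ • ω) := congrFun (hC g h) ω
  have hone (ω) : C 1 ω = 1 := congrFun hC.map_one ω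
  have hrep (ω) : C (D.rep ω) ω = 1 := by
    induction ω using D.induction with
    | one => rw [D.rep_one, hone]
    | step j ω hrep ih =>
      rw [hrep, hmul, hedge j ω (D.edge_eq_one_iff.2 hrep), D.inv_trans_smul, ih, one_mul]
  have hrep_inv (ω) : C (D.rep ω)⁻¹ ((1 : H) : H ⧸ G) = 1 := by
    simpa [hone, D.rep_smul_one, hrep] using (hmul (D.rep ω)⁻¹ (D.rep ω) ((1 : H) : H ⧸ G)).symm
  rw [coe_schreier, mul_assoc, hmul, hrep_inv, one_mul, inv_inv, D.rep_smul_one, hmul, hrep,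
    mul_one]

theorem exists_hom (hB : IsFreeProduct B) (φ : ∀ x, D.factor x →* X) (f : D.EdgeIndex → X) :
    ∃ Φ : G →* X, (∀ x (a : D.factor x), Φ a = φ x a) ∧
      ∀ x : D.EdgeIndex, Φ (D.edge x.1.1 x.1.2) = f x := by
  classical
  let z (j ω) : X := if hω : D.edge j ω ≠ 1 then f ⟨(j, ω), hω⟩ else 1
  have z_eq_one {j ω} (hω : D.edge j ω = 1) : z j ω = 1 := dif_neg (not_not_intro hω)
  obtain ⟨C, hC, hCB⟩ := D.exists_crossedHom hB φ z
  have φ_congr {x x'} {l l' : G} (hl : l ∈ D.factor x) (hl' : l' ∈ D.factor x') (hx : x = x')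
      (hll' : l = l') : φ x ⟨l, hl⟩ = φ x' ⟨l', hl'⟩ := by
    subst hx hll'
    rfl
  have hC_trans (j ω) : C (D.trans j ω) ω = z j ω := by
    rw [hCB j _ (D.trans_mem j ω), (φ_congr _ (one_mem _) rfl (D.loop_trans j ω)).trans
      (map_one _), D.inv_trans_smul, z_eq_one (D.edge_eq_one_of_base_eq (D.base_base j ω)),
      mul_one, inv_one, mul_one]
  have hC_schreier := D.crossedHom_schreier hC fun j ω hω => (hC_trans j ω).trans (z_eq_one hω)
  refine ⟨MonoidHom.mk' (fun g => C g ((1 : H) : H ⧸ G)) fun g g' => ?_, ?_, fun x => ?_⟩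
  · refine (congrFun (hC g g') _).trans (congrArg (C g _ * C g' ·) ?_)
    exact smul_one_of_mem (inv_mem g.2)
  · rintro ⟨⟨j, ω⟩, hω⟩ a
    have hloop : D.loop j (D.rep ω * a * (D.rep ω)⁻¹) ω = a := by
      rw [loop, D.inv_conj_rep_smul, D.edge_eq_one_of_base_eq hω, D.schreier_conj_rep, inv_one,
        one_mul, mul_one]
    calc C a ((1 : H) : H ⧸ G) = C (D.rep ω * a * (D.rep ω)⁻¹) ω := by
          rw [← hC_schreier _ ω, D.schreier_conj_rep]
      _ = φ (D.orbitIndex j ω) ⟨_, D.loop_mem_factor (D.mem_factor.1 a.2) ω⟩ := by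
          rw [hCB j _ (D.mem_factor.1 a.2), D.inv_conj_rep_smul,
            z_eq_one (D.edge_eq_one_of_base_eq hω), inv_one, one_mul, mul_one]
      _ = φ ⟨(j, ω), hω⟩ a := φ_congr _ a.2 (Subtype.ext (congrArg (Prod.mk j) hω)) hloop
  · calc C (D.edge x.1.1 x.1.2) ((1 : H) : H ⧸ G) = z x.1.1 x.1.2 := by
          rw [edge, hC_schreier, hC_trans]
      _ = f x := dif_pos x.2

end SchreierSystem

theorem IsFreeSplitting.exists_kurosh {B : J → Subgroup H} (hB : IsFreeProduct B)
    (G : Subgroup H) :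
    ∃ (I Y : Type (max u v)) (A : I → Subgroup G) (y : Y → G), IsFreeSplitting A y ∧
      ∀ i, ∃ h j, (A i).map G.subtype ≤ (B j).map (MulAut.conj h).toMonoidHom := by
  have hgen : ⨆ j, B j = ⊤ := by simpa [Set.range_eq_empty] using hB.iSup_sup_closure_range
  obtain ⟨D⟩ := SchreierSystem.nonempty_of_iSup_eq_top hgen G
  refine ⟨D.FactorIndex, D.EdgeIndex, D.factor, fun x => D.edge x.1.1 x.1.2,
    .of_exists_hom (D.iSup_factor_sup_closure_edges hgen) (D.exists_hom
      (X := Monoid.Coprod (Monoid.CoprodI fun x => D.factor x) (FreeGroup D.EdgeIndex)) hB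
      (fun _ => Monoid.Coprod.inl.comp (Monoid.CoprodI.of (M := fun x => D.factor x)))
      fun x => .inr (.of x)),
    fun x => ⟨(D.rep x.1.2)⁻¹, x.1.1, ?_⟩⟩
  rintro _ ⟨a, ha, rfl⟩
  exact ⟨_, D.mem_factor.1 ha, by simp [mul_assoc]⟩

end Kurosh

section KuroshConsequences

universe u v w

variable {H : Type u} {J : Type v} {R : Type w} [Group H] {B : J → Subgroup H} {x : R → H}

theorem isCyclic_and_infinite_of_range_le_zpowers {X : Type*} [Group X] [Nontrivial X]
    (f : X →* H) (hf : Function.Injective f) {g : H} (hg : ¬ IsOfFinOrder g)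
    (hle : f.range ≤ Subgroup.zpowers g) : IsCyclic X ∧ Infinite X := by
  let F : X →* Subgroup.zpowers g := f.codRestrict _ fun a => hle ⟨a, rfl⟩
  have hF : Function.Injective F := fun a b hab => hf (congrArg Subtype.val hab)
  refine ⟨isCyclic_of_injective F hF, not_finite_iff_infinite.1 fun _ => ?_⟩
  obtain ⟨a, ha⟩ := exists_ne (1 : X)
  obtain ⟨n, hn⟩ := hle ⟨a, rfl⟩
  obtain ⟨m, hm, hpow⟩ := (isOfFinOrder_of_finite a).exists_pow_eq_one
  have hzpow : g ^ (n * m) = g ^ (0 : ℤ) := by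
    rw [zpow_mul, zpow_natCast, zpow_zero, show g ^ n = f a from hn, ← map_pow, hpow, map_one]
  have hn0 : n = 0 := by
    simpa [hm.ne'] using injective_zpow_iff_not_isOfFinOrder.2 hg hzpow
  exact ha (hf (by simpa [hn0, eq_comm] using hn))

namespace IsFreeSplitting

theorem isCyclic_and_infinite_of_map_le_conj_zpowers (hB : IsFreeSplitting B x) {K : Subgroup H}
    {A : Subgroup K} (hA : A ≠ ⊥) {h : H} {r : R}
    (hle : A.map K.subtype ≤ (Subgroup.zpowers (x r)).map (MulAut.conj h).toMonoidHom) :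
    IsCyclic A ∧ Infinite A := by
  have := (Subgroup.nontrivial_iff_ne_bot A).2 hA
  refine isCyclic_and_infinite_of_range_le_zpowers (K.subtype.comp A.subtype)
    (K.subtype_injective.comp A.subtype_injective) (g := MulAut.conj h (x r))
    (fun hfin => hB.not_isOfFinOrder r
      ((MulAut.conj h).injective.isOfFinOrder_iff (f := (MulAut.conj h).toMonoidHom).1 hfin)) ?_
  rwa [MonoidHom.range_comp, A.range_subtype, ← MulEquiv.coe_toMonoidHom, ← MonoidHom.map_zpowers]

theorem exists_kurosh_ne_bot (hB : IsFreeSplitting B x) (K : Subgroup H) :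
    ∃ (I Y : Type (max u v w)) (A : I → Subgroup K) (y : Y → K), IsFreeSplitting A y ∧
      (∀ i, A i ≠ ⊥) ∧ ∀ i, ∃ h j,
        (A i).map K.subtype ≤ (B j).map (MulAut.conj h).toMonoidHom := by
  classical
  obtain ⟨I, Y, A, y, hA, hconj⟩ := hB.toFreeProduct.exists_kurosh K
  let I' := {i // A i ≠ ⊥}
  let P (i : I') : Prop := ∃ h j, (A i).map K.subtype ≤ (B j).map (MulAut.conj h).toMonoidHom
  have hcyclic (i : {i // ¬ P i}) : IsCyclic (A i) ∧ Infinite (A i) := by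
    obtain ⟨h, j | r, hle⟩ := hconj i
    · exact absurd ⟨h, j, hle⟩ i.2
    · exact hB.isCyclic_and_infinite_of_map_le_conj_zpowers i.1.2 hle
  have hsum : IsFreeSplitting
      (Sum.elim (fun i : {i // P i} => A i) fun i : {i // ¬ P i} => A i) y := by
    convert! hA.restrict_ne_bot.reindex (Equiv.sumCompl P) (Equiv.refl Y) using 1
    exact funext (Sum.rec (fun _ => rfl) fun _ => rfl)
  obtain ⟨g, hg⟩ := hsum.exists_of_isCyclic (fun i => (hcyclic i).1) fun i => (hcyclic i).2
  exact ⟨{i // P i}, Y ⊕ {i // ¬ P i}, _, _, hg, fun i => i.1.2, fun i => i.2⟩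

theorem exists_kurosh_of_fg (hB : IsFreeSplitting B x) (K : Subgroup H) [Group.FG K] :
    ∃ (I Y : Type (max u v w)) (_ : Finite I) (_ : Finite Y) (A : I → Subgroup K) (y : Y → K),
      IsFreeSplitting A y ∧ (∀ i, A i ≠ ⊥) ∧ ∀ i, ∃ h j,
        (A i).map K.subtype ≤ (B j).map (MulAut.conj h).toMonoidHom := by
  obtain ⟨I, Y, A, y, hA, hne, hconj⟩ := hB.exists_kurosh_ne_bot K
  exact ⟨I, Y, (hA.finite hne).1, (hA.finite hne).2, A, y, hA, hne, hconj⟩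

end IsFreeSplitting

theorem FreelyIndecomposable.exists_le_conj {H : Type} [Group H] {B : J → Subgroup H} {x : R → H}
    (hB : IsFreeSplitting B x) {M : Subgroup H} [Nontrivial M] (hM : FreelyIndecomposable M)
    (hZ : IsEmpty (M ≃* Multiplicative ℤ)) :
    ∃ h j, M ≤ (B j).map (MulAut.conj h).toMonoidHom := by
  obtain ⟨I, Y, A, y, hA, -, hconj⟩ := hB.exists_kurosh_ne_bot M
  obtain ⟨i | t, htop⟩ := hM.exists_eq_top hA.toFreeProduct
  · obtain ⟨h, j, hle⟩ := hconj i
    refine ⟨h, j, ?_⟩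
    rwa [show A i = ⊤ from htop, ← MonoidHom.range_eq_map, M.range_subtype] at hle
  · replace htop : Subgroup.zpowers (y t) = ⊤ := htop
    have : Infinite M := by
      rw [← Set.infinite_univ_iff, ← Subgroup.coe_top, ← htop]
      exact infinite_zpowers.2 (hA.not_isOfFinOrder t)
    exact (hZ.false (intEquivOfZPowersEqTop (y t) htop).symm).elim

end KuroshConsequences

/-! ### Kernels of contractions between Hilbert spaces -/

section Contraction

open ContinuousLinearMap Filter Topology
open scoped InnerProductSpace

variable {V W : Type*} [NormedAddCommGroup V] [InnerProductSpace ℝ V]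
  [NormedAddCommGroup W] [InnerProductSpace ℝ W]

theorem inner_starProjection_self (K : Submodule ℝ V) [K.HasOrthogonalProjection] (v : V) :
    ⟪v, K.starProjection v⟫_ℝ = ‖K.starProjection v‖ ^ 2 := by
  rw [real_inner_comm]
  exact K.re_inner_starProjection_eq_normSq v

variable [CompleteSpace V] [CompleteSpace W]

theorem isPositive_pow {A : V →L[ℝ] V} (hA : A.IsPositive) (k : ℕ) : (A ^ k).IsPositive := by
  have hadj (l : ℕ) : adjoint (A ^ l) = A ^ l := (hA.isSelfAdjoint.pow l).adjoint_eq
  obtain ⟨l, rfl | rfl⟩ := Nat.even_or_odd' k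
  · have h := isPositive_adjoint_comp_self (A ^ l)
    rwa [hadj, ← mul_def, ← pow_add, ← two_mul] at h
  · have h := hA.conj_adjoint (A ^ l)
    rwa [hadj, ← mul_def, ← mul_def, ← mul_assoc, ← pow_succ, ← pow_add, add_right_comm,
      ← two_mul] at h

theorem adjoint_comp_one_sub_pow (T : V →L[ℝ] W) (k : ℕ) :
    adjoint T ∘L (1 - T ∘L adjoint T) ^ k = ((1 - adjoint T ∘L T) ^ k) ∘L adjoint T := by
  have hone : adjoint T ∘L (1 - T ∘L adjoint T) = (1 - adjoint T ∘L T) ∘L adjoint T := by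
    ext w
    simp
  induction k with
  | zero => rfl
  | succ k ih =>
    rw [pow_succ, mul_def, ← comp_assoc, ih, comp_assoc, hone, ← comp_assoc, pow_succ, mul_def]

theorem isPositive_one_sub_self_comp_adjoint {T : V →L[ℝ] W} (hT : ‖T‖ ≤ 1) :
    (1 - T ∘L adjoint T).IsPositive := by
  rw [isPositive_iff]
  refine ⟨?_, fun w => ?_⟩
  · exact isPositive_one.isSymmetric.sub (isPositive_self_comp_adjoint T).isSymmetric
  · have hw : ‖adjoint T w‖ ≤ ‖w‖ := by
      simpa using (adjoint T).le_of_opNorm_le ((adjoint.norm_map T).trans_le hT) w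
    have hsq : ⟪T (adjoint T w), w⟫_ℝ = ‖adjoint T w‖ ^ 2 := by
      rw [← adjoint_inner_right, real_inner_self_eq_norm_sq]
    change 0 ≤ ⟪w - T (adjoint T w), w⟫_ℝ
    rw [inner_sub_left, hsq, real_inner_self_eq_norm_sq]
    exact sub_nonneg.2 (by gcongr)

theorem norm_one_sub_adjoint_comp_self_le_one {T : V →L[ℝ] W} (hT : ‖T‖ ≤ 1) :
    ‖1 - adjoint T ∘L T‖ ≤ 1 := by
  refine opNorm_le_bound _ zero_le_one fun v => ?_
  have hTv : ‖adjoint T (T v)‖ ≤ ‖T v‖ := by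
    simpa using (adjoint T).le_of_opNorm_le ((adjoint.norm_map T).trans_le hT) (T v)
  have hsq : ‖v - adjoint T (T v)‖ ^ 2 = ‖v‖ ^ 2 - 2 * ‖T v‖ ^ 2 + ‖adjoint T (T v)‖ ^ 2 := by
    rw [norm_sub_sq_real, adjoint_inner_right, real_inner_self_eq_norm_sq]
  rw [one_mul]
  change ‖v - adjoint T (T v)‖ ≤ ‖v‖
  refine le_of_sq_le_sq ?_ (norm_nonneg v)
  nlinarith [norm_nonneg (adjoint T (T v))]

theorem eqLocus_one_sub_adjoint_comp_self (T : V →L[ℝ] W) :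
    (1 - adjoint T ∘L T).eqLocus (1 : V →L[ℝ] V) = T.ker := by
  ext v
  rw [← ker_adjoint_comp_self]
  simp [LinearMap.mem_eqLocus]

theorem tendsto_average_inner_pow {T : V →L[ℝ] W} (hT : ‖T‖ ≤ 1) (v : V) :
    Tendsto (fun k : ℕ => (k : ℝ)⁻¹ *
        ∑ j ∈ Finset.range k, ⟪v, ((1 - adjoint T ∘L T) ^ j) v⟫_ℝ) atTop
      (𝓝 (‖T.ker.starProjection v‖ ^ 2)) := by
  set A := 1 - adjoint T ∘L T with hA
  have hlim := A.tendsto_birkhoffAverage_orthogonalProjection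
    (norm_one_sub_adjoint_comp_self_le_one hT) v
  have hproj : ((A.eqLocus (1 : V →L[ℝ] V)).orthogonalProjectionOnto v : V)
      = T.ker.starProjection v := by
    rw [← Submodule.starProjection_apply]
    simp only [hA, eqLocus_one_sub_adjoint_comp_self]
  rw [hproj] at hlim
  rw [← inner_starProjection_self]
  refine (tendsto_const_nhds.inner hlim).congr fun k => ?_
  simp [birkhoffAverage, birkhoffSum, inner_smul_right, inner_sum]

end Contraction

/-! ### Square-summable functions on a set with a group action -/

section SquareSummable

open ContinuousLinearMap
open scoped InnerProductSpace lp

variable {X Y : Type*}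

theorem summable_sq_of_l2 (f : ℓ²(X, ℝ)) : Summable fun x => f x ^ 2 := by
  simpa using (lp.memℓp f).summable (by norm_num)

theorem l2_norm_sq (f : ℓ²(X, ℝ)) : ‖f‖ ^ 2 = ∑' x, f x ^ 2 := by
  simpa using lp.norm_rpow_eq_tsum (p := 2) (by norm_num) f

/-- Restriction of square-summable functions along an embedding of the index sets. -/
noncomputable def l2Comap (σ : X ↪ Y) : ℓ²(Y, ℝ) →L[ℝ] ℓ²(X, ℝ) :=
  LinearMap.mkContinuous
    { toFun f := ⟨fun x => f (σ x), memℓp_gen <| by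
        simpa [Function.comp_def] using (summable_sq_of_l2 f).comp_injective σ.injective⟩
      map_add' _ _ := rfl
      map_smul' _ _ := rfl } 1 fun f => by
    rw [one_mul]
    refine le_of_sq_le_sq ?_ (norm_nonneg f)
    rw [l2_norm_sq, l2_norm_sq]
    exact tsum_comp_le_tsum_of_inj (summable_sq_of_l2 f) (fun _ => sq_nonneg _) σ.injective

@[simp] theorem l2Comap_apply (σ : X ↪ Y) (f : ℓ²(Y, ℝ)) (x : X) : l2Comap σ f x = f (σ x) :=
  rfl

open Classical in
/-- The indicator function of a point, as a square-summable function. -/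
noncomputable def l2Single (x : X) : ℓ²(X, ℝ) := lp.single 2 x 1

open Classical in
theorem l2Single_apply (x y : X) : l2Single x y = if y = x then 1 else 0 := by
  simp [l2Single, lp.single_apply, Pi.single_apply]

theorem inner_l2Single_left (x : X) (f : ℓ²(X, ℝ)) : ⟪l2Single x, f⟫_ℝ = f x := by
  classical
  simp [l2Single, lp.inner_single_left]

theorem inner_l2Single_right (x : X) (f : ℓ²(X, ℝ)) : ⟪f, l2Single x⟫_ℝ = f x := by
  rw [real_inner_comm, inner_l2Single_left]

theorem adjoint_apply_l2Single (T : ℓ²(X, ℝ) →L[ℝ] ℓ²(Y, ℝ)) (x : X) (y : Y) :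
    adjoint T (l2Single y) x = T (l2Single x) y := by
  rw [← inner_l2Single_left, adjoint_inner_right, inner_l2Single_right]

theorem comp_apply_l2Single {n Z : Type*} [Fintype n] (S : ℓ²((Σ _ : n, Z), ℝ) →L[ℝ] ℓ²(X, ℝ))
    (T : ℓ²(X, ℝ) →L[ℝ] ℓ²((Σ _ : n, Z), ℝ)) (x : X) :
    (S ∘L T) (l2Single x) x =
      ∑ l, ∑' z : Z, T (l2Single x) ⟨l, z⟩ * S (l2Single ⟨l, z⟩) x := by
  have hsum := lp.hasSum_inner (𝕜 := ℝ) (adjoint S (l2Single x)) (T (l2Single x))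
  simp only [adjoint_apply_l2Single, adjoint_inner_left, inner_l2Single_left] at hsum
  rw [comp_apply, ← hsum.tsum_eq, hsum.summable.tsum_sigma, tsum_fintype]
  rfl

theorem adjoint_l2Comap_apply_self (σ : X ↪ Y) (f : ℓ²(X, ℝ)) (x : X) :
    adjoint (l2Comap σ) f (σ x) = f x := by
  have h : l2Comap σ (l2Single (σ x)) = l2Single x := by
    classical
    ext z
    rw [l2Comap_apply, l2Single_apply, l2Single_apply]
    exact if_congr σ.injective.eq_iff rfl rfl
  rw [← inner_l2Single_left, adjoint_inner_right, h, inner_l2Single_left]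

theorem adjoint_l2Comap_apply_of_notMem_range {σ : X ↪ Y} {y : Y} (hy : y ∉ Set.range σ)
    (f : ℓ²(X, ℝ)) : adjoint (l2Comap σ) f y = 0 := by
  have h : l2Comap σ (l2Single y) = 0 := by
    ext z
    simp [l2Single_apply, show σ z ≠ y from fun hz => hy ⟨z, hz⟩]
  rw [← inner_l2Single_left, adjoint_inner_right, h, inner_zero_left]

/-- The `k`-th coordinate of a vector of square-summable functions. -/
noncomputable abbrev l2Coord {n : Type*} (k : n) : ℓ²((Σ _ : n, X), ℝ) →L[ℝ] ℓ²(X, ℝ) :=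
  l2Comap (Function.Embedding.sigmaMk (β := fun _ => X) k)

/-- The operator whose coordinates are the operators of a given finite family. -/
noncomputable def l2Stack {n : Type*} [Fintype n] (T : n → ℓ²(X, ℝ) →L[ℝ] ℓ²(Y, ℝ)) :
    ℓ²(X, ℝ) →L[ℝ] ℓ²((Σ _ : n, Y), ℝ) :=
  ∑ k, adjoint (l2Coord k) ∘L T k

theorem adjoint_l2Coord_apply {n : Type*} [DecidableEq n] (k l : n) (f : ℓ²(X, ℝ)) (x : X) :
    adjoint (l2Coord l) f ⟨k, x⟩ = if l = k then f x else 0 := by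
  split_ifs with hlk
  · subst hlk
    exact adjoint_l2Comap_apply_self (Function.Embedding.sigmaMk (β := fun _ => X) l) f x
  · have hrange : (⟨k, x⟩ : Σ _ : n, X) ∉
        Set.range (Function.Embedding.sigmaMk (β := fun _ => X) l) :=
      fun ⟨_, hz⟩ => hlk (congrArg Sigma.fst hz)
    exact adjoint_l2Comap_apply_of_notMem_range hrange f

theorem l2Stack_apply {n : Type*} [Fintype n] (T : n → ℓ²(X, ℝ) →L[ℝ] ℓ²(Y, ℝ)) (f : ℓ²(X, ℝ))
    (k : n) (y : Y) : l2Stack T f ⟨k, y⟩ = T k f y := by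
  classical
  rw [l2Stack, _root_.sum_apply, lp.coeFn_sum, Finset.sum_apply]
  simp only [comp_apply, adjoint_l2Coord_apply, Finset.sum_ite_eq', Finset.mem_univ, if_true]

theorem l2Stack_eq_zero_iff {n : Type*} [Fintype n] {T : n → ℓ²(X, ℝ) →L[ℝ] ℓ²(Y, ℝ)}
    {f : ℓ²(X, ℝ)} : l2Stack T f = 0 ↔ ∀ k, T k f = 0 := by
  refine ⟨fun h k => ?_, fun h => ?_⟩
  · ext y
    rw [← l2Stack_apply, h]
    rfl
  · ext ⟨k, y⟩
    rw [l2Stack_apply, h]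
    rfl

theorem norm_sq_starProjection_l2Single (K : Submodule ℝ ℓ²(X, ℝ)) [K.HasOrthogonalProjection]
    (x : X) : ‖K.starProjection (l2Single x)‖ ^ 2 = K.starProjection (l2Single x) x := by
  rw [← inner_starProjection_self, inner_l2Single_left]

theorem norm_sq_starProjection_l2Single_eq_zero {K : Submodule ℝ ℓ²(X, ℝ)}
    [K.HasOrthogonalProjection] {x : X} (hK : ∀ f ∈ K, f x = 0) :
    ‖K.starProjection (l2Single x)‖ ^ 2 = 0 := by
  rw [norm_sq_starProjection_l2Single, hK _ (K.starProjection_apply_mem _)]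

theorem norm_sq_starProjection_l2Single_le {K : Submodule ℝ ℓ²(X, ℝ)}
    [K.HasOrthogonalProjection] {F : Set X} {x : X} (hx : x ∈ F)
    (hK : ∀ f ∈ K, ∀ z ∈ F, f z = f x) :
    ‖K.starProjection (l2Single x)‖ ^ 2 ≤ (Nat.card F : ℝ)⁻¹ := by
  set f := K.starProjection (l2Single x)
  have hconst (z : F) : f z = f x := hK f (K.starProjection_apply_mem _) z z.2
  have hnorm : ‖f‖ ^ 2 = f x := norm_sq_starProjection_l2Single K x
  have hsum : Summable fun _ : F => f x ^ 2 :=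
    ((summable_sq_of_l2 f).comp_injective Subtype.val_injective).congr fun z => by
      rw [Function.comp_apply, hconst]
  have hle : Nat.card F * f x ^ 2 ≤ f x := calc
    Nat.card F * f x ^ 2 = ∑' z : F, f z ^ 2 := by simp only [hconst, tsum_const, nsmul_eq_mul]
    _ ≤ ∑' z, f z ^ 2 := tsum_comp_le_tsum_of_inj (summable_sq_of_l2 f) (fun _ => sq_nonneg _)
      Subtype.val_injective
    _ = f x := by rw [← l2_norm_sq, hnorm]
  rw [hnorm]
  rcases (hnorm ▸ sq_nonneg ‖f‖ : 0 ≤ f x).eq_or_lt with hzero | hpos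
  · rw [← hzero]
    positivity
  · have : Finite F := by
      by_contra hinf
      have : Infinite F := not_finite_iff_infinite.1 hinf
      exact hpos.ne' (pow_eq_zero_iff two_ne_zero |>.1 ((summable_const_iff _).1 hsum))
    have : Nonempty F := ⟨x, hx⟩
    have hcard : (0 : ℝ) < Nat.card F := by exact_mod_cast Nat.card_pos
    rw [← one_div, le_div_iff₀ hcard]
    nlinarith

end SquareSummable

section EquivariantMaps

open ContinuousLinearMap
open scoped lp

variable (H X Y : Type*) [Group H] [MulAction H X] [MulAction H Y]

/-- The bounded operators between `ℓ²`-spaces that commute with the translations by a group acting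
on the index sets. -/
def equivariantMaps : Submodule ℝ (ℓ²(X, ℝ) →L[ℝ] ℓ²(Y, ℝ)) where
  carrier := {T | ∀ g : H, T ∘L l2Comap (MulAction.toPerm g).toEmbedding
    = l2Comap (MulAction.toPerm g).toEmbedding ∘L T}
  zero_mem' _ := by simp
  add_mem' hS hT g := by rw [add_comp, comp_add, hS, hT]
  smul_mem' c T hT g := by rw [smul_comp, comp_smul, hT]

variable {H X Y} {Z : Type*} [MulAction H Z] {T : ℓ²(X, ℝ) →L[ℝ] ℓ²(Y, ℝ)}

theorem mem_equivariantMaps : T ∈ equivariantMaps H X Y ↔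
    ∀ (g : H) f y, T (l2Comap (MulAction.toPerm g).toEmbedding f) y = T f (g • y) := by
  refine ⟨fun hT g f y => ?_, fun hT g => ?_⟩
  · exact congrFun (congrArg Subtype.val (DFunLike.congr_fun (hT g) f)) y
  · ext f y
    exact hT g f y

theorem comp_mem_equivariantMaps {S : ℓ²(Y, ℝ) →L[ℝ] ℓ²(Z, ℝ)} (hS : S ∈ equivariantMaps H Y Z)
    (hT : T ∈ equivariantMaps H X Y) : S ∘L T ∈ equivariantMaps H X Z := fun g => by
  rw [comp_assoc, hT g, ← comp_assoc, hS g, comp_assoc]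

theorem one_mem_equivariantMaps : (1 : ℓ²(X, ℝ) →L[ℝ] ℓ²(X, ℝ)) ∈ equivariantMaps H X X :=
  fun _ => rfl

theorem pow_mem_equivariantMaps {A : ℓ²(X, ℝ) →L[ℝ] ℓ²(X, ℝ)} (hA : A ∈ equivariantMaps H X X)
    (k : ℕ) : A ^ k ∈ equivariantMaps H X X := by
  induction k with
  | zero => exact one_mem_equivariantMaps
  | succ k ih => exact pow_succ A k ▸ comp_mem_equivariantMaps ih hA

theorem adjoint_l2Comap_toPerm (g : H) :
    adjoint (l2Comap (MulAction.toPerm g : Equiv.Perm X).toEmbedding)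
      = l2Comap (MulAction.toPerm g⁻¹).toEmbedding := by
  ext f x
  simpa using adjoint_l2Comap_apply_self (MulAction.toPerm g).toEmbedding f (g⁻¹ • x)

theorem adjoint_mem_equivariantMaps (hT : T ∈ equivariantMaps H X Y) :
    adjoint T ∈ equivariantMaps H Y X := fun g => by
  have h := congrArg adjoint (hT g⁻¹)
  rw [adjoint_comp, adjoint_comp, adjoint_l2Comap_toPerm, adjoint_l2Comap_toPerm, inv_inv] at h
  exact h.symm

theorem apply_l2Single_smul (hT : T ∈ equivariantMaps H X Y) (g : H) (x : X) (y : Y) :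
    T (l2Single x) (g • y) = T (l2Single (g⁻¹ • x)) y := by
  classical
  have h : l2Comap (MulAction.toPerm g).toEmbedding (l2Single x) = l2Single (g⁻¹ • x) := by
    ext z
    rw [l2Comap_apply, l2Single_apply, l2Single_apply]
    exact if_congr eq_inv_smul_iff.symm rfl rfl
  rw [← mem_equivariantMaps.1 hT, h]

theorem apply_l2Single_one {m n : Type*} {T : ℓ²((Σ _ : m, H), ℝ) →L[ℝ] ℓ²((Σ _ : n, H), ℝ)}
    (hT : T ∈ equivariantMaps H (Σ _ : m, H) (Σ _ : n, H)) (i : m) (j : n) (h : H) :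
    T (l2Single ⟨i, 1⟩) ⟨j, h⟩ = T (l2Single ⟨i, h⁻¹⟩) ⟨j, 1⟩ := by
  simpa using apply_l2Single_smul hT h ⟨i, 1⟩ ⟨j, 1⟩

theorem l2Coord_mem_equivariantMaps {n : Type*} (k : n) :
    l2Coord k ∈ equivariantMaps H (Σ _ : n, X) X :=
  fun _ => rfl

theorem l2Stack_mem_equivariantMaps {n : Type*} [Fintype n] {T : n → ℓ²(X, ℝ) →L[ℝ] ℓ²(Y, ℝ)}
    (hT : ∀ k, T k ∈ equivariantMaps H X Y) : l2Stack T ∈ equivariantMaps H X (Σ _ : n, Y) := by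
  refine mem_equivariantMaps.2 fun g f ⟨k, y⟩ => ?_
  rw [Sigma.smul_mk, l2Stack_apply, l2Stack_apply, mem_equivariantMaps.1 (hT k)]

end EquivariantMaps

/-! ### Von Neumann trace and dimension -/

section VonNeumann

open ContinuousLinearMap Filter Topology
open scoped InnerProductSpace lp

variable {H m n : Type*} [Group H] [Fintype m] [Fintype n]

/-- The von Neumann trace of an operator on `ℓ²(H)ᵐ`. It is a trace on the equivariant operators. -/
noncomputable def vnTrace (A : ℓ²((Σ _ : m, H), ℝ) →L[ℝ] ℓ²((Σ _ : m, H), ℝ)) : ℝ :=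
  ∑ i, A (l2Single ⟨i, 1⟩) ⟨i, 1⟩

theorem vnTrace_one : vnTrace (1 : ℓ²((Σ _ : m, H), ℝ) →L[ℝ] ℓ²((Σ _ : m, H), ℝ))
    = Fintype.card m := by
  simp [vnTrace, l2Single_apply]

theorem vnTrace_sub (A B : ℓ²((Σ _ : m, H), ℝ) →L[ℝ] ℓ²((Σ _ : m, H), ℝ)) :
    vnTrace (A - B) = vnTrace A - vnTrace B := by
  simp [vnTrace]

theorem vnTrace_nonneg {A : ℓ²((Σ _ : m, H), ℝ) →L[ℝ] ℓ²((Σ _ : m, H), ℝ)}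
    (hA : A.IsPositive) : 0 ≤ vnTrace A :=
  Finset.sum_nonneg fun i _ => inner_l2Single_left (⟨i, 1⟩ : Σ _ : m, H) _ ▸
    hA.inner_nonneg_right _

theorem vnTrace_comp_comm {S : ℓ²((Σ _ : n, H), ℝ) →L[ℝ] ℓ²((Σ _ : m, H), ℝ)}
    {T : ℓ²((Σ _ : m, H), ℝ) →L[ℝ] ℓ²((Σ _ : n, H), ℝ)}
    (hS : S ∈ equivariantMaps H (Σ _ : n, H) (Σ _ : m, H))
    (hT : T ∈ equivariantMaps H (Σ _ : m, H) (Σ _ : n, H)) :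
    vnTrace (S ∘L T) = vnTrace (T ∘L S) := by
  simp only [vnTrace, comp_apply_l2Single]
  rw [Finset.sum_comm]
  refine Finset.sum_congr rfl fun l _ => Finset.sum_congr rfl fun i _ => ?_
  rw [← (Equiv.inv H).tsum_eq]
  refine tsum_congr fun h => ?_
  rw [Equiv.inv_apply, apply_l2Single_one hT, inv_inv, apply_l2Single_one hS, mul_comm]

/-- The von Neumann dimension of a closed subspace of `ℓ²(H)ᵐ`, i.e. the von Neumann trace of the
orthogonal projection onto it. -/
noncomputable def vnDim (K : Submodule ℝ ℓ²((Σ _ : m, H), ℝ)) [K.HasOrthogonalProjection] : ℝ :=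
  ∑ i, ‖K.starProjection (l2Single ⟨i, 1⟩)‖ ^ 2

section Kernel

variable {T : ℓ²((Σ _ : m, H), ℝ) →L[ℝ] ℓ²((Σ _ : n, H), ℝ)}

theorem card_sub_card_le_vnTrace_pow (hT : T ∈ equivariantMaps H (Σ _ : m, H) (Σ _ : n, H))
    (hT1 : ‖T‖ ≤ 1) (k : ℕ) :
    (Fintype.card m : ℝ) - Fintype.card n ≤ vnTrace ((1 - adjoint T ∘L T) ^ k) := by
  set A := 1 - adjoint T ∘L T with hA
  set A' := 1 - T ∘L adjoint T with hA'
  have hTadj := adjoint_mem_equivariantMaps hT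
  have hA'mem : A' ∈ equivariantMaps H (Σ _ : n, H) (Σ _ : n, H) :=
    sub_mem one_mem_equivariantMaps (comp_mem_equivariantMaps hT hTadj)
  let Z := (∑ j ∈ Finset.range k, A' ^ j) ∘L T
  have hZ : Z ∈ equivariantMaps H (Σ _ : m, H) (Σ _ : n, H) :=
    comp_mem_equivariantMaps (sum_mem fun j _ => pow_mem_equivariantMaps hA'mem j) hT
  have hleft : adjoint T ∘L Z = 1 - A ^ k := by
    rw [← geom_sum_mul_neg, hA, sub_sub_cancel, ← hA, mul_def, ← comp_assoc, ← comp_assoc]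
    simp only [comp_finsetSum, finsetSum_comp, A', A, adjoint_comp_one_sub_pow]
  have hright : Z ∘L adjoint T = 1 - A' ^ k := by
    rw [← geom_sum_mul_neg, hA', sub_sub_cancel, ← hA', mul_def, comp_assoc]
  have htrace := vnTrace_comp_comm hTadj hZ
  rw [hleft, hright, vnTrace_sub, vnTrace_sub, vnTrace_one, vnTrace_one] at htrace
  have hnonneg := vnTrace_nonneg (isPositive_pow (isPositive_one_sub_self_comp_adjoint hT1) k)
  linarith

theorem card_sub_card_le_vnDim_ker_of_norm_le_one
    (hT : T ∈ equivariantMaps H (Σ _ : m, H) (Σ _ : n, H)) (hT1 : ‖T‖ ≤ 1) :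
    (Fintype.card m : ℝ) - Fintype.card n ≤ vnDim T.ker := by
  have hlim := tendsto_finsetSum Finset.univ fun (i : m) _ =>
    tendsto_average_inner_pow hT1 (l2Single (⟨i, 1⟩ : Σ _ : m, H))
  refine ge_of_tendsto hlim ?_
  filter_upwards [eventually_gt_atTop 0] with k hk
  simp only [inner_l2Single_left]
  rw [← Finset.mul_sum, Finset.sum_comm, le_inv_mul_iff₀ (by exact_mod_cast hk)]
  calc (k : ℝ) * (Fintype.card m - Fintype.card n)
      = ∑ _j ∈ Finset.range k, ((Fintype.card m : ℝ) - Fintype.card n) := by simp [mul_sub]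
    _ ≤ _ := Finset.sum_le_sum fun j _ => card_sub_card_le_vnTrace_pow hT hT1 j

theorem card_sub_card_le_vnDim_ker (hT : T ∈ equivariantMaps H (Σ _ : m, H) (Σ _ : n, H)) :
    (Fintype.card m : ℝ) - Fintype.card n ≤ vnDim T.ker := by
  have hpos : 0 < ‖T‖ + 1 := by positivity
  have hnorm : ‖(‖T‖ + 1)⁻¹ • T‖ ≤ 1 := by
    rw [norm_smul, norm_inv, Real.norm_of_nonneg hpos.le, inv_mul_le_iff₀ hpos]
    linarith
  have hker : ((‖T‖ + 1)⁻¹ • T).ker = T.ker := by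
    ext f
    simp [hpos.ne']
  have h := card_sub_card_le_vnDim_ker_of_norm_le_one
    (Submodule.smul_mem _ (‖T‖ + 1)⁻¹ hT) hnorm
  simpa only [hker] using h

end Kernel

end VonNeumann

/-! ### Cocycles in the regular representation -/

section L2Cocycle

open ContinuousLinearMap
open scoped lp

variable {H : Type*} [Group H]

/-- The right regular representation of a group on its square-summable functions. It commutes with
the left translations, which define `equivariantMaps`. -/
noncomputable def l2Translation : H →* (ℓ²(H, ℝ) →L[ℝ] ℓ²(H, ℝ)) where
  toFun g := l2Comap (Equiv.mulRight g).toEmbedding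
  map_one' := by
    ext f u
    simp
  map_mul' g h := by
    ext f u
    simp [mul_assoc]

@[simp] theorem l2Translation_apply (g u : H) (f : ℓ²(H, ℝ)) : l2Translation g f u = f (u * g) :=
  rfl

theorem l2Translation_mul_apply (g h : H) (f : ℓ²(H, ℝ)) :
    l2Translation (g * h) f = l2Translation g (l2Translation h f) := by
  rw [map_mul, mul_apply_eq_comp]

theorem l2Translation_injective (g : H) : Function.Injective (l2Translation g) :=
  Function.LeftInverse.injective (g := l2Translation g⁻¹) fun f => by
    rw [← l2Translation_mul_apply, inv_mul_cancel, map_one, one_apply_eq_self]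

theorem l2Translation_mem_equivariantMaps (g : H) : l2Translation g ∈ equivariantMaps H H H :=
  mem_equivariantMaps.2 fun h f u => by simp [mul_assoc]

theorem eq_zero_of_l2Translation_eq_self {g : H} (hg : ¬ IsOfFinOrder g) {f : ℓ²(H, ℝ)}
    (hf : l2Translation g f = f) : f = 0 := by
  ext u
  have hconst (n : ℕ) : f (u * g ^ n) = f u := by
    induction n with
    | zero => simp
    | succ n ih => rw [pow_succ, ← mul_assoc, ← l2Translation_apply, hf, ih]
  have hinj : Function.Injective fun n : ℕ => u * g ^ n :=
    (mul_right_injective u).comp (injective_pow_iff_not_isOfFinOrder.2 hg)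
  have hsum : Summable fun _ : ℕ => f u ^ 2 :=
    ((summable_sq_of_l2 f).comp_injective hinj).congr fun n => by rw [Function.comp_apply, hconst]
  simpa using (summable_const_iff _).1 hsum

/-- The ambient group is generated by `K` and `s`, and `s` lies in `K` or is a root of an element of
infinite order of `K`. -/
def IsRootExtension (K : Subgroup H) (s : H) : Prop :=
  K ⊔ Subgroup.zpowers s = ⊤ ∧ (s ∈ K ∨ ∃ k : ℕ, s ^ k ∈ K ∧ ¬ IsOfFinOrder (s ^ k))

namespace IsRootExtension

variable {K L : Subgroup H} {s : H}

theorem of_eq_top (hK : K = ⊤) : IsRootExtension K 1 :=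
  ⟨by rw [hK, top_sup_eq], Or.inl (one_mem K)⟩

theorem mono (h : IsRootExtension K s) (hKL : K ≤ L) : IsRootExtension L s :=
  ⟨top_unique (h.1.symm.le.trans (sup_le_sup_right hKL _)),
    h.2.imp (@hKL s) fun ⟨k, hk, hfin⟩ => ⟨k, hKL hk, hfin⟩⟩

theorem eq_top_of_le (h : IsRootExtension K s) (hKL : K ≤ L) (hs : s ∈ L) : L = ⊤ :=
  top_unique (h.1.symm.le.trans (sup_le hKL (Subgroup.zpowers_le.2 hs)))

end IsRootExtension

/-- The 1-cocycles of a group with values in its right regular representation. -/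
def IsL2Cocycle (e : H → ℓ²(H, ℝ)) : Prop :=
  ∀ g h, e (g * h) = e g + l2Translation g (e h)

namespace IsL2Cocycle

variable {e : H → ℓ²(H, ℝ)}

theorem map_one (he : IsL2Cocycle e) : e 1 = 0 := by
  simpa using he 1 1

theorem map_inv (he : IsL2Cocycle e) (g : H) : e g⁻¹ = -l2Translation g⁻¹ (e g) := by
  have h := he g⁻¹ g
  rw [inv_mul_cancel, he.map_one] at h
  exact eq_neg_of_add_eq_zero_left h.symm

/-- The subgroup on which a cocycle vanishes. -/
def ker (he : IsL2Cocycle e) : Subgroup H where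
  carrier := {g | e g = 0}
  one_mem' := he.map_one
  mul_mem' {g h} hg hh := by
    rw [Set.mem_ofPred_eq] at hg hh ⊢
    rw [he, hg, hh, map_zero, add_zero]
  inv_mem' {g} hg := by
    rw [Set.mem_ofPred_eq] at hg ⊢
    rw [he.map_inv, hg, map_zero, neg_zero]

theorem conj_mem_ker (he : IsL2Cocycle e) {c b : H} {p : ℓ²(H, ℝ)} (hc : e c = l2Translation c p)
    (hb : e b = l2Translation b p - p) : c * b * c⁻¹ ∈ he.ker := by
  have hinv : e c⁻¹ = -p := by
    rw [he.map_inv, hc, ← l2Translation_mul_apply, inv_mul_cancel, _root_.map_one,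
      one_apply_eq_self]
  change e (c * b * c⁻¹) = 0
  rw [he, he, hc, hb, hinv, map_sub, map_neg, l2Translation_mul_apply]
  abel

theorem mem_ker_of_pow_mem (he : IsL2Cocycle e) {s : H} {k : ℕ} (hs : s ^ k ∈ he.ker)
    (hfin : ¬ IsOfFinOrder (s ^ k)) : s ∈ he.ker := by
  have hs0 : e (s ^ k) = 0 := hs
  refine eq_zero_of_l2Translation_eq_self hfin ?_
  calc l2Translation (s ^ k) (e s) = e (s ^ k * s) := by rw [he, hs0, zero_add]
    _ = e (s * s ^ k) := by rw [← pow_succ, pow_succ']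
    _ = e s := by rw [he, hs0, map_zero, add_zero]

theorem eq_zero_of_isRootExtension (he : IsL2Cocycle e) {K : Subgroup H} {s : H}
    (hK : IsRootExtension K s) (hle : K ≤ he.ker) (g : H) : e g = 0 := by
  have hs : s ∈ he.ker :=
    hK.2.elim (@hle s) fun ⟨_, hk, hfin⟩ => he.mem_ker_of_pow_mem (hle hk) hfin
  have hg : g ∈ he.ker := hK.eq_top_of_le hle hs ▸ Subgroup.mem_top g
  exact hg

end IsL2Cocycle

theorem IsFreeSplitting.exists_additive_crossedHom {I Y N : Type*} [AddCommGroup N]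
    {A : I → Subgroup H} {y : Y → H} (h : IsFreeSplitting A y) (a : H →* AddMonoid.End N)
    (c : I → N) (w : Y → N) :
    ∃ d : H → N, (∀ g g', d (g * g') = d g + a g (d g')) ∧
      (∀ i, ∀ b ∈ A i, d b = a b (c i) - c i) ∧ ∀ t, d (y t) = w t := by
  let : DistribMulAction H N := DistribMulAction.compHom N a
  let θ : H →* MulAut (Multiplicative N) :=
    (MulAutMultiplicative N).symm.toMonoidHom.comp (DistribMulAction.toAddAut H N)
  obtain ⟨d, hd, hA, hy⟩ := h.exists_crossedHom θ
    (fun i b => Multiplicative.ofAdd (a b (c i) - c i))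
    (fun i b b' => Multiplicative.toAdd.injective <| by
      change a (b * b') (c i) - c i = a b (c i) - c i + a b (a b' (c i) - c i)
      rw [map_mul, map_sub, AddMonoid.End.coe_mul, Function.comp_apply]
      abel)
    (Multiplicative.ofAdd ∘ w)
  exact ⟨fun g => (d g).toAdd, hd, fun i b hb => hA i ⟨b, hb⟩, hy⟩

end L2Cocycle

/-! ### The `ℓ²`-inequality -/

section L2Inequality

open ContinuousLinearMap
open scoped lp

variable {H J R I Y : Type*} [Group H]

/-- The subgroup generated by the conjugates `c i * B (φ i) * (c i)⁻¹` and the elements `y t`. -/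
def conjugateSpan (B : J → Subgroup H) (φ : I → J) (c : I → H) (y : Y → H) : Subgroup H :=
  (⨆ i, (B (φ i)).map (MulAut.conj (c i)).toMonoidHom) ⊔ Subgroup.closure (Set.range y)

theorem conjugateSpan_le {B : J → Subgroup H} {φ : I → J} {c : I → H} {y : Y → H} {K : Subgroup H}
    (hconj : ∀ i, ∀ b ∈ B (φ i), c i * b * (c i)⁻¹ ∈ K) (hy : ∀ t, y t ∈ K) :
    conjugateSpan B φ c y ≤ K :=
  sup_le (iSup_le fun i => Subgroup.map_le_iff_le_comap.2 (hconj i))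
    ((Subgroup.closure_le _).2 (Set.range_subset_iff.2 hy))

/-- `d` is the universal cocycle of a free splitting: `d · u` is the cocycle in the regular
representation that is the coboundary of the `j`-th coordinate of `u` on `B j` and takes the value
of the `r`-th coordinate of `u` at `x r`. -/
structure IsUniversalL2Cocycle (B : J → Subgroup H) (x : R → H)
    (d : H → ℓ²((Σ _ : J ⊕ R, H), ℝ) →L[ℝ] ℓ²(H, ℝ)) : Prop where
  mem_equivariantMaps (g : H) : d g ∈ equivariantMaps H (Σ _ : J ⊕ R, H) H
  isL2Cocycle (u : ℓ²((Σ _ : J ⊕ R, H), ℝ)) : IsL2Cocycle fun g => d g u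
  apply_of_mem (j : J) {b : H} (hb : b ∈ B j) (u : ℓ²((Σ _ : J ⊕ R, H), ℝ)) :
    d b u = l2Translation b (l2Coord (.inl j) u) - l2Coord (.inl j) u
  apply_gen (r : R) (u : ℓ²((Σ _ : J ⊕ R, H), ℝ)) : d (x r) u = l2Coord (.inr r) u

theorem IsFreeSplitting.exists_isUniversalL2Cocycle {B : J → Subgroup H} {x : R → H}
    (hB : IsFreeSplitting B x) : ∃ d, IsUniversalL2Cocycle B x d := by
  let N := equivariantMaps H (Σ _ : J ⊕ R, H) H
  let translate : H →* AddMonoid.End N :=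
    { toFun g :=
        { toFun T := ⟨l2Translation g ∘L T,
            comp_mem_equivariantMaps (l2Translation_mem_equivariantMaps g) T.2⟩
          map_zero' := Subtype.ext (comp_zero _)
          map_add' S T := Subtype.ext (comp_add _ _ _) }
      map_one' := by
        ext1 T
        exact Subtype.ext (congrArg (· ∘L T.1) (map_one l2Translation))
      map_mul' g h := by
        ext1 T
        exact Subtype.ext (congrArg (· ∘L T.1) (map_mul l2Translation g h)) }
  let coord (k : J ⊕ R) : N := ⟨l2Coord k, l2Coord_mem_equivariantMaps k⟩
  obtain ⟨d, hmul, hfactor, hgen⟩ :=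
    hB.exists_additive_crossedHom translate (coord ∘ Sum.inl) (coord ∘ Sum.inr)
  refine ⟨fun g => d g, fun g => (d g).2, fun u g h => ?_, fun j b hb u => ?_, fun r u => ?_⟩
  · exact congrArg (fun T : N => T.1 u) (hmul g h)
  · exact congrArg (fun T : N => T.1 u) (hfactor j b hb)
  · exact congrArg (fun T : N => T.1 u) (hgen r)

namespace IsUniversalL2Cocycle

variable {B : J → Subgroup H} {x : R → H} {d : H → ℓ²((Σ _ : J ⊕ R, H), ℝ) →L[ℝ] ℓ²(H, ℝ)}
  {φ : I → J} {c : I → H} {y : Y → H} {s : H}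

theorem apply_eq_zero (hd : IsUniversalL2Cocycle B x d)
    (hs : IsRootExtension (conjugateSpan B φ c y) s) {u : ℓ²((Σ _ : J ⊕ R, H), ℝ)}
    (hc : ∀ i, d (c i) u = l2Translation (c i) (l2Coord (.inl (φ i)) u))
    (hy : ∀ t, d (y t) u = 0) (g : H) : d g u = 0 :=
  (hd.isL2Cocycle u).eq_zero_of_isRootExtension hs
    (conjugateSpan_le (fun i _ hb =>
      (hd.isL2Cocycle u).conj_mem_ker (hc i) (hd.apply_of_mem (φ i) hb u)) hy) g

variable [Fintype I] [Fintype Y]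

/-- The linear conditions on `u` that force the cocycle `d · u` to vanish on
`conjugateSpan B φ c y`: on each `c i * B (φ i) * (c i)⁻¹` it suffices that `d (c i) u` is the
translate of the coordinate of which `d · u` is the coboundary on `B (φ i)`. -/
noncomputable def relationMap (d : H → ℓ²((Σ _ : J ⊕ R, H), ℝ) →L[ℝ] ℓ²(H, ℝ)) (φ : I → J)
    (c : I → H) (y : Y → H) : ℓ²((Σ _ : J ⊕ R, H), ℝ) →L[ℝ] ℓ²((Σ _ : I ⊕ Y, H), ℝ) :=
  l2Stack (Sum.elim (fun i => d (c i) - l2Translation (c i) ∘L l2Coord (.inl (φ i)))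
    fun t => d (y t))

theorem relationMap_mem_equivariantMaps (hd : IsUniversalL2Cocycle B x d) :
    relationMap d φ c y ∈ equivariantMaps H (Σ _ : J ⊕ R, H) (Σ _ : I ⊕ Y, H) :=
  l2Stack_mem_equivariantMaps (Sum.rec
    (fun _ => sub_mem (hd.mem_equivariantMaps _) (comp_mem_equivariantMaps
      (l2Translation_mem_equivariantMaps _) (l2Coord_mem_equivariantMaps _)))
    fun _ => hd.mem_equivariantMaps _)

theorem apply_eq_zero_of_mem_ker (hd : IsUniversalL2Cocycle B x d)
    (hs : IsRootExtension (conjugateSpan B φ c y) s) {u : ℓ²((Σ _ : J ⊕ R, H), ℝ)}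
    (hu : u ∈ (relationMap d φ c y).ker) :
    (∀ g, d g u = 0) ∧ ∀ i, l2Coord (.inl (φ i)) u = 0 := by
  have hrow (k : I ⊕ Y) := l2Stack_eq_zero_iff.1 hu k
  have hc (i) : d (c i) u = l2Translation (c i) (l2Coord (.inl (φ i)) u) :=
    sub_eq_zero.1 (hrow (.inl i))
  have hzero := hd.apply_eq_zero hs hc fun t => hrow (.inr t)
  exact ⟨hzero, fun i => l2Translation_injective (c i) (by rw [← hc, hzero, map_zero])⟩

theorem vnDim_ker_relationMap_le [Fintype J] [Fintype R] (hd : IsUniversalL2Cocycle B x d)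
    (hs : IsRootExtension (conjugateSpan B φ c y) s) :
    vnDim (relationMap d φ c y).ker ≤
      ∑ j, (Set.range φ)ᶜ.indicator (fun j => (Nat.card (B j) : ℝ)⁻¹) j := by
  have hgen (r : R) : ‖(relationMap d φ c y).ker.starProjection (l2Single ⟨.inr r, 1⟩)‖ ^ 2 = 0 :=
    norm_sq_starProjection_l2Single_eq_zero fun u hu => by
      have h := (hd.apply_gen r u).symm.trans ((hd.apply_eq_zero_of_mem_ker hs hu).1 _)
      exact congrArg (fun f : ℓ²(H, ℝ) => f 1) h
  rw [vnDim, Fintype.sum_sum_type, Finset.sum_eq_zero fun r _ => hgen r, add_zero]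
  refine Finset.sum_le_sum fun j _ => ?_
  by_cases hj : j ∈ Set.range φ
  · obtain ⟨i, rfl⟩ := hj
    rw [Set.indicator_of_notMem (Set.notMem_compl_iff.2 (Set.mem_range_self i))]
    refine (norm_sq_starProjection_l2Single_eq_zero fun u hu => ?_).le
    exact congrArg (fun f : ℓ²(H, ℝ) => f 1) ((hd.apply_eq_zero_of_mem_ker hs hu).2 i)
  · rw [Set.indicator_of_mem hj]
    have hcard : Nat.card (Sigma.mk (β := fun _ : J ⊕ R => H) (.inl j) '' B j) = Nat.card (B j) :=
      Nat.card_image_of_injective sigma_mk_injective _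
    rw [← hcard]
    refine norm_sq_starProjection_l2Single_le ⟨1, one_mem (B j), rfl⟩ ?_
    rintro u hu _ ⟨b, hb, rfl⟩
    have h := (hd.apply_of_mem j hb u).symm.trans ((hd.apply_eq_zero_of_mem_ker hs hu).1 b)
    simpa using congrArg (fun f : ℓ²(H, ℝ) => f 1) (sub_eq_zero.1 h)

end IsUniversalL2Cocycle

-- For infinite `B j` the junk value `(0 : ℝ)⁻¹ = 0` is the intended reciprocal of its order.
theorem IsFreeSplitting.card_add_card_le_of_isRootExtension [Fintype J] [Fintype R] [Fintype I]
    [Fintype Y] {B : J → Subgroup H} {x : R → H} (hB : IsFreeSplitting B x) {φ : I → J} {c : I → H}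
    {y : Y → H} {s : H} (hs : IsRootExtension (conjugateSpan B φ c y) s) :
    (Fintype.card J + Fintype.card R : ℝ) ≤ Fintype.card I + Fintype.card Y +
      ∑ j, (Set.range φ)ᶜ.indicator (fun j => (Nat.card (B j) : ℝ)⁻¹) j := by
  obtain ⟨d, hd⟩ := hB.exists_isUniversalL2Cocycle
  have hle := (card_sub_card_le_vnDim_ker hd.relationMap_mem_equivariantMaps).trans
    (hd.vnDim_ker_relationMap_le hs)
  rw [Fintype.card_sum, Fintype.card_sum] at hle
  push_cast at hle
  linarith

end L2Inequality

/-! ### Free factors of root extensions -/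

section RankInequalities

variable {H J R I Y : Type*} [Group H]

theorem card_le_card_of_apply_mem_span {k P : Type*} [Field k] [Fintype P] [Fintype Y]
    (D : H →* Multiplicative (P → k)) (hD : ∀ p, ∃ h, (D h).toAdd = Pi.basisFun k P p) (y : Y → H)
    (hspan : ∀ h, (D h).toAdd ∈ Submodule.span k (Set.range fun t => (D (y t)).toAdd)) :
    Fintype.card P ≤ Fintype.card Y := by
  have htop : Submodule.span k (Set.range fun t => (D (y t)).toAdd) = ⊤ := by
    rw [eq_top_iff, ← (Pi.basisFun k P).span_eq, Submodule.span_le]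
    rintro _ ⟨p, rfl⟩
    obtain ⟨h, hh⟩ := hD p
    exact hh ▸ hspan h
  have hrank := finrank_range_le_card (R := k) fun t => (D (y t)).toAdd
  rwa [Set.finrank, htop, finrank_top, Module.finrank_fintype_fun_eq_card] at hrank

theorem inv_card_le_half {K : Subgroup H} (hK : K ≠ ⊥) : (Nat.card K : ℝ)⁻¹ ≤ 2⁻¹ := by
  rcases Nat.eq_zero_or_pos (Nat.card K) with h0 | hpos
  · simp [h0]
  · have htwo : 2 ≤ Nat.card K := by
      have := mt Subgroup.card_eq_one.1 hK
      lia
    exact inv_anti₀ two_pos (by exact_mod_cast htwo)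

namespace IsFreeSplitting

variable {B : J → Subgroup H} {x : R → H} {φ : I → J} {c : I → H} {y : Y → H} {s : H}

theorem card_gens_le_of_isRootExtension [Fintype R] [Fintype Y] (hB : IsFreeSplitting B x)
    (hs : IsRootExtension (conjugateSpan B φ c y) s) : Fintype.card R ≤ Fintype.card Y := by
  classical
  obtain ⟨D, hDB, hDx⟩ := hB.exists_hom (fun _ => 1)
    fun r => Multiplicative.ofAdd (Pi.basisFun ℚ R r)
  let W := Submodule.span ℚ (Set.range fun t => (D (y t)).toAdd)
  let L : Subgroup H := W.toAddSubgroup.toSubgroup.comap D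
  have hL : conjugateSpan B φ c y ≤ L := by
    refine conjugateSpan_le (fun i b hb => ?_) fun t => Submodule.subset_span ⟨t, rfl⟩
    have hDb : D b = 1 := hDB (φ i) ⟨b, hb⟩
    rw [Subgroup.mem_comap, map_mul, map_mul, hDb, mul_one, map_inv, mul_inv_cancel]
    exact one_mem _
  have hsL : s ∈ L := by
    refine hs.2.elim (@hL s) fun ⟨k, hk, hfin⟩ => ?_
    have hk0 : (k : ℚ) ≠ 0 := by
      rintro h
      simp [Nat.cast_eq_zero.1 h] at hfin
    have hpow : k • (D s).toAdd ∈ W := by simpa [L] using hL hk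
    rwa [← Nat.cast_smul_eq_nsmul ℚ, W.smul_mem_iff hk0] at hpow
  have htop := hs.eq_top_of_le hL hsL
  refine card_le_card_of_apply_mem_span D (fun r => ⟨x r, congrArg _ (hDx r)⟩) y fun h => ?_
  have hh : h ∈ L := htop ▸ Subgroup.mem_top h
  exact hh

theorem card_add_card_le_of_card_eq_prime [Fintype J] [Fintype R] [Fintype Y]
    (hB : IsFreeSplitting B x) (hy : Subgroup.closure (Set.range y) = ⊤) {p : ℕ} [Fact p.Prime]
    (hcard : ∀ j, Nat.card (B j) = p) :
    Fintype.card J + Fintype.card R ≤ Fintype.card Y := by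
  classical
  let b := Pi.basisFun (ZMod p) (J ⊕ R)
  let e (j : J) : B j ≃* Multiplicative (ZMod p) :=
    mulEquivOfPrimeCardEq (p := p) (hcard j) (by simp)
  obtain ⟨D, hDB, hDx⟩ := hB.exists_hom (X := Multiplicative (J ⊕ R → ZMod p))
    (fun j =>
      (LinearMap.toSpanSingleton (ZMod p) _ (b (.inl j))).toAddMonoidHom.toMultiplicative.comp
        (e j).toMonoidHom)
    fun r => Multiplicative.ofAdd (b (.inr r))
  rw [← Fintype.card_sum]
  refine card_le_card_of_apply_mem_span D ?_ y fun h => ?_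
  · rintro (j | r)
    · exact ⟨(e j).symm (Multiplicative.ofAdd 1), by rw [hDB]; simp [b]⟩
    · exact ⟨x r, congrArg _ (hDx r)⟩
  · let W := Submodule.span (ZMod p) (Set.range fun t => (D (y t)).toAdd)
    have hle : Subgroup.closure (Set.range y) ≤ W.toAddSubgroup.toSubgroup.comap D :=
      (Subgroup.closure_le _).2 (Set.range_subset_iff.2 fun t => Submodule.subset_span ⟨t, rfl⟩)
    exact hle (hy ▸ Subgroup.mem_top h)

theorem card_add_card_le_of_closure_eq_top [Fintype J] [Fintype R] [Fintype Y]
    (hB : IsFreeSplitting B x) (hy : Subgroup.closure (Set.range y) = ⊤) :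
    (Fintype.card J + Fintype.card R : ℝ) ≤ Fintype.card Y + ∑ j, (Nat.card (B j) : ℝ)⁻¹ := by
  have hspan : conjugateSpan B (Empty.elim : Empty → J) Empty.elim y = ⊤ :=
    top_unique (hy ▸ le_sup_right)
  simpa [Set.range_eq_empty] using
    hB.card_add_card_le_of_isRootExtension (IsRootExtension.of_eq_top hspan)

-- By the `ℓ²`-inequality, two factors could only be present if all factors had order two, and that
-- is excluded by counting modulo two.
theorem card_le_one_of_closure_eq_top [Fintype J] [Fintype R] [Fintype Y]
    (hB : IsFreeSplitting B x) (hne : ∀ j, B j ≠ ⊥) (hy : Subgroup.closure (Set.range y) = ⊤)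
    (hcard : Fintype.card Y ≤ Fintype.card R + 1) : Fintype.card J ≤ 1 := by
  by_contra! hJ
  have htwo (j : J) : Nat.card (B j) = 2 := by
    by_contra hj
    have hsum : ∑ j, (Nat.card (B j) : ℝ)⁻¹ < ∑ _j : J, (2 : ℝ)⁻¹ :=
      Finset.sum_lt_sum (fun j _ => inv_card_le_half (hne j)) ⟨j, Finset.mem_univ j,
        (inv_card_le_half (hne j)).lt_of_ne fun h => hj (by exact_mod_cast inv_injective h)⟩
    rw [Finset.sum_const, Finset.card_univ, nsmul_eq_mul] at hsum
    have hle := hB.card_add_card_le_of_closure_eq_top hy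
    have hcard' : (Fintype.card Y : ℝ) ≤ Fintype.card R + 1 := by exact_mod_cast hcard
    have hJ' : (2 : ℝ) ≤ Fintype.card J := by exact_mod_cast hJ
    linarith
  have : Fact (Nat.Prime 2) := ⟨Nat.prime_two⟩
  have hle := hB.card_add_card_le_of_card_eq_prime hy htwo
  lia

theorem nonempty_mulEquiv_range_inl_of {M : J → Type*} [∀ j, Group (M j)]
    (e : Monoid.Coprod (Monoid.CoprodI M) (FreeGroup R) ≃* H) (j : J) :
    Nonempty (M j ≃*
      (e.toMonoidHom.comp (Monoid.Coprod.inl.comp (Monoid.CoprodI.of (i := j)))).range) :=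
  ⟨MonoidHom.ofInjective
    (e.injective.comp (Monoid.Coprod.inl_injective.comp (Monoid.CoprodI.of_injective j)))⟩

theorem exists_quotient_restrict (hB : IsFreeSplitting B x) (S : Set J) :
    ∃ Ψ : H →* Monoid.Coprod (Monoid.CoprodI fun j : S => B j) (FreeGroup R),
      Function.Surjective Ψ ∧ ∀ j ∉ S, B j ≤ Ψ.ker := by
  classical
  let inc (j : S) : B j →* Monoid.Coprod (Monoid.CoprodI fun j : S => B j) (FreeGroup R) :=
    Monoid.Coprod.inl.comp (Monoid.CoprodI.of (M := fun j : S => B j) (i := j))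
  obtain ⟨Ψ, hΨB, hΨx⟩ := hB.exists_hom (fun j => if hj : j ∈ S then inc ⟨j, hj⟩ else 1)
    fun r => Monoid.Coprod.inr (FreeGroup.of r)
  refine ⟨Ψ, MonoidHom.range_eq_top.1 ?_, fun j hj b hb => ?_⟩
  · refine (ofMulEquiv (MulEquiv.refl _)).eq_top_of_le (fun j => ?_) fun r => ⟨x r, hΨx r⟩
    rintro _ ⟨b, rfl⟩
    exact ⟨b, by rw [hΨB, dif_pos j.2]; rfl⟩
  · simpa [hj] using hΨB j ⟨b, hb⟩

theorem card_compl_range_le_one [Finite J] [Fintype R] [Fintype Y] (hB : IsFreeSplitting B x)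
    (hne : ∀ j, B j ≠ ⊥) (hs : IsRootExtension (conjugateSpan B φ c y) s)
    (hcard : Fintype.card Y ≤ Fintype.card R) : (Set.range φ)ᶜ.ncard ≤ 1 := by
  have := Fintype.ofFinite ↥(Set.range φ)ᶜ
  obtain ⟨Ψ, hsurj, hker⟩ := hB.exists_quotient_restrict (Set.range φ)ᶜ
  let z : Option Y → _ := fun o => Ψ (o.elim s y)
  have htop : (Subgroup.closure (Set.range z)).comap Ψ = ⊤ := by
    refine hs.eq_top_of_le (conjugateSpan_le (fun i b hb => ?_) fun t => ?_) ?_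
    · have hb1 : Ψ b = 1 := hker (φ i) (by simp) hb
      rw [Subgroup.mem_comap, map_mul, map_mul, hb1, mul_one, map_inv, mul_inv_cancel]
      exact one_mem _
    · exact Subgroup.subset_closure ⟨some t, rfl⟩
    · exact Subgroup.subset_closure ⟨none, rfl⟩
  have hclosure : Subgroup.closure (Set.range z) = ⊤ := by
    rw [← Subgroup.map_comap_eq_self_of_surjective hsurj (Subgroup.closure _), htop,
      Subgroup.map_top_of_surjective Ψ hsurj]
  rw [← Nat.card_coe_set_eq, Nat.card_eq_fintype_card]
  refine (ofMulEquiv (MulEquiv.refl _)).card_le_one_of_closure_eq_top (fun j => ?_) hclosure ?_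
  · obtain ⟨e⟩ := nonempty_mulEquiv_range_inl_of (R := R)
      (M := fun j : ↥(Set.range φ)ᶜ => B j) (MulEquiv.refl _) j
    have := (Subgroup.nontrivial_iff_ne_bot _).2 (hne j)
    exact (Subgroup.nontrivial_iff_ne_bot _).1 e.symm.toEquiv.nontrivial
  · simpa using hcard

theorem toLex_le_toLex_of_isRootExtension [Fintype J] [Fintype R] [Fintype I] [Fintype Y]
    (hB : IsFreeSplitting B x) (hne : ∀ j, B j ≠ ⊥)
    (hs : IsRootExtension (conjugateSpan B φ c y) s) :
    toLex (Fintype.card R, Fintype.card J) ≤ toLex (Fintype.card Y, Fintype.card I) := by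
  rw [Prod.Lex.toLex_le_toLex]
  refine (hB.card_gens_le_of_isRootExtension hs).lt_or_eq.imp_right fun hRY => ⟨hRY, ?_⟩
  have hle := hB.card_add_card_le_of_isRootExtension hs
  have hunhit : ∑ j, (Set.range φ)ᶜ.indicator (fun j => (Nat.card (B j) : ℝ)⁻¹) j ≤ 2⁻¹ := by
    calc ∑ j, (Set.range φ)ᶜ.indicator (fun j => (Nat.card (B j) : ℝ)⁻¹) j
        ≤ ∑ j, (Set.range φ)ᶜ.indicator (fun _ => (2 : ℝ)⁻¹) j := Finset.sum_le_sum fun j _ =>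
          Set.indicator_le_indicator (inv_card_le_half (hne j))
      _ = (Set.range φ)ᶜ.ncard * (2 : ℝ)⁻¹ := by
          classical
          rw [Finset.sum_indicator_eq_sum_filter, Finset.sum_const, nsmul_eq_mul,
            Set.ncard_eq_toFinset_card', Set.filter_mem_univ_eq_toFinset]
      _ ≤ 2⁻¹ := mul_le_of_le_one_left (by norm_num)
          (by exact_mod_cast hB.card_compl_range_le_one hne hs hRY.ge)
  have hRY' : (Fintype.card R : ℝ) = Fintype.card Y := by exact_mod_cast hRY
  have hlt : (Fintype.card J : ℝ) < Fintype.card I + 1 := by linarith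
  exact Nat.lt_succ_iff.1 (by exact_mod_cast hlt)

end IsFreeSplitting

end RankInequalities

/-! ### Scott complexity -/

section FreeSplitting

variable {G H : Type*} [Group G] [Group H] {q p r b : ℕ}

/-- `G` is a free product of `p` nontrivial groups, not assumed to be indecomposable, and a free
group of rank `q`. -/
def HasFreeSplitting (G : Type*) [Group G] (q p : ℕ) : Prop :=
  ∃ (A : Fin p → Subgroup G) (y : Fin q → G), IsFreeSplitting A y ∧ ∀ i, A i ≠ ⊥

theorem IsFreeSplitting.hasFreeSplitting {I Y : Type*} [Fintype I] [Fintype Y]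
    {A : I → Subgroup G} {y : Y → G} (hA : IsFreeSplitting A y) (hne : ∀ i, A i ≠ ⊥) :
    HasFreeSplitting G (Fintype.card Y) (Fintype.card I) :=
  ⟨_, _, hA.reindex (Fintype.equivFin I).symm (Fintype.equivFin Y).symm, fun _ => hne _⟩

theorem IsFreeSplitting.range_le_conjugateSpan {I Y J : Type*} {A : I → Subgroup G} {y : Y → G}
    (hA : IsFreeSplitting A y) (f : G →* H) {B : J → Subgroup H} {φ : I → J} {c : I → H}
    (hc : ∀ i, (A i).map f ≤ (B (φ i)).map (MulAut.conj (c i)).toMonoidHom) :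
    f.range ≤ conjugateSpan B φ c (f ∘ y) := by
  rw [MonoidHom.range_eq_map, ← hA.iSup_sup_closure_range, Subgroup.map_sup, Subgroup.map_iSup,
    MonoidHom.map_closure, ← Set.range_comp]
  exact sup_le_sup_right (iSup_mono hc) _

theorem IsRootExtension.subgroupOf_sup_zpowers {K : Subgroup H} {s : H} {k : ℕ} (hk : s ^ k ∈ K)
    (hfin : ¬ IsOfFinOrder (s ^ k)) :
    IsRootExtension (K.subgroupOf (K ⊔ Subgroup.zpowers s))
      ⟨s, le_sup_right (a := K) (Subgroup.mem_zpowers s)⟩ := by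
  refine ⟨Subgroup.map_injective (Subgroup.subtype_injective _) ?_, .inr ⟨k, hk, ?_⟩⟩
  · rw [Subgroup.map_sup, Subgroup.map_subgroupOf_eq_of_le le_sup_left, MonoidHom.map_zpowers,
      ← MonoidHom.range_eq_map, Subgroup.range_subtype]
    rfl
  · rwa [← Submonoid.isOfFinOrder_coe]

namespace HasFreeSplitting

theorem congr (e : G ≃* H) : HasFreeSplitting G q p → HasFreeSplitting H q p := by
  rintro ⟨A, y, hA, hne⟩
  exact ⟨_, _, hA.map e,
    fun i => (Subgroup.map_eq_bot_iff_of_injective _ e.injective).not.2 (hne i)⟩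

theorem exists_of_isRootExtension (hH : HasFreeSplitting H r b) {K : Subgroup H} [Group.FG K]
    {s : H} (hs : IsRootExtension K s) :
    ∃ q p, HasFreeSplitting K q p ∧ toLex (r, b) ≤ toLex (q, p) := by
  obtain ⟨B, x, hB, hne⟩ := hH
  obtain ⟨I, Y, _, _, A, y, hA, hAne, hconj⟩ := hB.exists_kurosh_of_fg K
  choose c φ hc using hconj
  have := Fintype.ofFinite I
  have := Fintype.ofFinite Y
  have hle : K ≤ conjugateSpan B φ c (K.subtype ∘ y) :=
    K.range_subtype.ge.trans (hA.range_le_conjugateSpan K.subtype hc)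
  exact ⟨_, _, hA.hasFreeSplitting hAne,
    by simpa using hB.toLex_le_toLex_of_isRootExtension hne (hs.mono hle)⟩

theorem exists_of_sup_closure_eq_top (hH : HasFreeSplitting H r b) {S : Set H}
    (hS : S.Finite) {K : Subgroup H} [Group.FG K] (hgen : K ⊔ Subgroup.closure S = ⊤)
    (hroot : ∀ s ∈ S, ∃ k : ℕ, s ^ k ∈ K ∧ ¬ IsOfFinOrder (s ^ k)) :
    ∃ q p, HasFreeSplitting K q p ∧ toLex (r, b) ≤ toLex (q, p) := by
  induction S, hS using Set.Finite.induction_on generalizing K with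
  | empty => exact hH.exists_of_isRootExtension (.of_eq_top (by simpa using hgen))
  | @insert s S _ _ ih =>
    obtain ⟨k, hk, hfin⟩ := hroot s (Set.mem_insert s S)
    have hfg : Group.FG ↥(K ⊔ Subgroup.zpowers s) := by
      rw [Group.fg_iff_subgroup_fg] at *
      exact Subgroup.FG.sup ‹_› ⟨{s}, by simp [Subgroup.zpowers_eq_closure]⟩
    have hgen' : K ⊔ Subgroup.zpowers s ⊔ Subgroup.closure S = ⊤ := by
      rwa [sup_assoc, Subgroup.zpowers_eq_closure, ← Subgroup.closure_union,
        Set.singleton_union]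
    obtain ⟨q₁, p₁, hsplit, hle⟩ := ih hgen' fun t ht =>
      (hroot t (Set.mem_insert_of_mem s ht)).imp fun _ h => h.imp_left (le_sup_left (a := K) ·)
    let e := Subgroup.subgroupOfEquivOfLe (le_sup_left : K ≤ K ⊔ Subgroup.zpowers s)
    have : Group.FG (K.subgroupOf (K ⊔ Subgroup.zpowers s)) :=
      Group.fg_of_surjective (f := e.symm.toMonoidHom) e.symm.surjective
    obtain ⟨q, p, hsplit', hle'⟩ :=
      hsplit.exists_of_isRootExtension (IsRootExtension.subgroupOf_sup_zpowers hk hfin)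
    exact ⟨q, p, hsplit'.congr e, hle.trans hle'⟩

end HasFreeSplitting

end FreeSplitting

section ScottComplexity

variable {G : Type} [Group G]

theorem FreelyIndecomposable.congr {H : Type} [Group H] (e : G ≃* H) (h : FreelyIndecomposable G) :
    FreelyIndecomposable H :=
  fun C D _ _ ⟨e'⟩ => h C D _ _ ⟨e.trans e'⟩

namespace HasScott

variable {a : ℤ} {p r b : ℕ}

theorem exists_isFreeSplitting (h : HasScott G a p) :
    ∃ (q : ℕ) (A : Fin p → Subgroup G) (y : Fin q → G), a = q - 1 ∧ IsFreeSplitting A y ∧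
      ∀ i, Nontrivial (A i) ∧ FreelyIndecomposable (A i) ∧ IsEmpty (A i ≃* Multiplicative ℤ) := by
  obtain ⟨q, M, _, ha, hnt, hind, hZ, ⟨e⟩⟩ := h
  refine ⟨q, _, _, ha, .ofMulEquiv e.symm, fun i => ?_⟩
  obtain ⟨f⟩ := IsFreeSplitting.nonempty_mulEquiv_range_inl_of e.symm i
  have := hnt i
  exact ⟨f.symm.toEquiv.nontrivial, (hind i).congr f, ⟨fun g => (hZ i).false (f.trans g)⟩⟩

theorem hasFreeSplitting (h : HasScott G a p) : ∃ q : ℕ, a = q - 1 ∧ HasFreeSplitting G q p := by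
  obtain ⟨q, A, y, ha, hA, hfactor⟩ := h.exists_isFreeSplitting
  exact ⟨q, ha, A, y, hA, fun i => (Subgroup.nontrivial_iff_ne_bot _).1 (hfactor i).1⟩

theorem toLex_le_of_hasFreeSplitting (h : HasScott G a p) (hG : HasFreeSplitting G r b) :
    ∃ q : ℕ, a = q - 1 ∧ toLex (r, b) ≤ toLex (q, p) := by
  obtain ⟨q, A, y, ha, hA, hfactor⟩ := h.exists_isFreeSplitting
  obtain ⟨B, x, hB, hne⟩ := hG
  have hconj (i : Fin p) : ∃ c j, A i ≤ (B j).map (MulAut.conj c).toMonoidHom :=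
    have := (hfactor i).1
    (hfactor i).2.1.exists_le_conj hB (hfactor i).2.2
  choose c φ hc using hconj
  have htop : conjugateSpan B φ c y = ⊤ :=
    top_unique <| (MonoidHom.range_eq_top.2 Function.surjective_id).ge.trans
      (hA.range_le_conjugateSpan (MonoidHom.id G) (by simpa using hc))
  exact ⟨q, ha, by simpa using hB.toLex_le_toLex_of_isRootExtension hne (.of_eq_top htop)⟩

end HasScott

end ScottComplexity

/-! ### Adjoining roots -/

section AdjoinRoots

variable {G : Type} [Group G] {n : ℕ} (γ : Fin n → G) (k : Fin n → ℕ)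

/-- The generator `sᵢ` of `⟨G, s₁, …, s_n | sᵢ^{kᵢ} = γᵢ⟩`. -/
def adjoinedRoot (i : Fin n) : AdjoinRoots G γ k :=
  QuotientGroup.mk' _ (.inr (.of i))

theorem adjoinedRoot_pow (i : Fin n) : adjoinedRoot γ k i ^ k i = adjoinRootsIncl G γ k (γ i) := by
  have hrel := (QuotientGroup.eq_one_iff _).2 (Subgroup.subset_normalClosure (s :=
    {x : Monoid.Coprod G (FreeGroup (Fin n)) | ∃ i, x = .inr (.of i) ^ k i * (.inl (γ i))⁻¹})
    ⟨i, rfl⟩)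
  exact mul_inv_eq_one.1 hrel

theorem range_adjoinRootsIncl_sup_closure_adjoinedRoot :
    (adjoinRootsIncl G γ k).range ⊔ Subgroup.closure (Set.range (adjoinedRoot γ k)) = ⊤ := by
  let mk : Monoid.Coprod G (FreeGroup (Fin n)) →* AdjoinRoots G γ k := QuotientGroup.mk' _
  have hroots : Subgroup.closure (Set.range (adjoinedRoot γ k)) =
      (mk.comp Monoid.Coprod.inr).range := by
    rw [MonoidHom.range_eq_map, ← FreeGroup.closure_range_of, MonoidHom.map_closure,
      ← Set.range_comp]
    rfl
  have hincl : (adjoinRootsIncl G γ k).range = (mk.comp Monoid.Coprod.inl).range := rfl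
  rw [hroots, hincl, MonoidHom.range_comp, MonoidHom.range_comp, ← Subgroup.map_sup,
    Monoid.Coprod.range_inl_sup_range_inr,
    Subgroup.map_top_of_surjective mk (QuotientGroup.mk'_surjective _)]

theorem Indivisible.not_isOfFinOrder {g : G} (hg : Indivisible g) : ¬ IsOfFinOrder g := by
  intro hfin
  obtain ⟨m, hm, hpow⟩ := isOfFinOrder_iff_pow_eq_one.1 hfin
  exact hg g (m + 1) (by lia) (by rw [pow_succ, hpow, one_mul])

end AdjoinRoots

theorem scott_decreases_under_adjoining_roots_general
    (G : Type) [Group G] [Group.FG G]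
    (n : ℕ) (γ : Fin n → G) (k : Fin n → ℕ)
    (hγ : ∀ i, ¬ IsOfFinOrder (γ i))
    (H : Type) [Group H]
    (π : AdjoinRoots G γ k →* H) (hπ : Function.Surjective π)
    (hinj : Function.Injective (π.comp (adjoinRootsIncl G γ k))) :
    ∀ a b a' b', HasScott H a b → HasScott G a' b' →
      ScottLE (a, b) (a', b') := by
  intro a b a' b' hH hG
  have hgen : (π.comp (adjoinRootsIncl G γ k)).range ⊔
      Subgroup.closure (Set.range fun i => π (adjoinedRoot γ k i)) = ⊤ := by
    rw [Set.range_comp', ← MonoidHom.map_closure, MonoidHom.range_comp, ← Subgroup.map_sup,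
      range_adjoinRootsIncl_sup_closure_adjoinedRoot, Subgroup.map_top_of_surjective π hπ]
  have hpow (i : Fin n) :
      π (adjoinedRoot γ k i) ^ k i = π.comp (adjoinRootsIncl G γ k) (γ i) := by
    rw [← map_pow, adjoinedRoot_pow, MonoidHom.comp_apply]
  have hfin (i : Fin n) : ¬ IsOfFinOrder (π (adjoinedRoot γ k i) ^ k i) := by
    rw [hpow, hinj.isOfFinOrder_iff]
    exact hγ i
  obtain ⟨r, rfl, hHsplit⟩ := hH.hasFreeSplitting
  obtain ⟨q₁, p₁, hsplit, hle₁⟩ := hHsplit.exists_of_sup_closure_eq_top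
    (Set.finite_range _) hgen (Set.forall_mem_range.2 fun i => ⟨k i, ⟨γ i, (hpow i).symm⟩, hfin i⟩)
  obtain ⟨q, rfl, hle₂⟩ :=
    hG.toLex_le_of_hasFreeSplitting (hsplit.congr (MonoidHom.ofInjective hinj).symm)
  have hle := hle₁.trans hle₂
  rw [Prod.Lex.toLex_le_toLex] at hle
  simpa [ScottLE] using hle

/-- Let `G` be finitely generated, `γ₁, …, γ_n` indivisible elements of `G`
representing distinct conjugacy classes with `γᵢ` not conjugate to `γⱼ^{±1}`
for `i ≠ j`, and let `G' = ⟨G, sᵢ | sᵢ^{kᵢ} = γᵢ⟩` with all `kᵢ ≥ 2`.  If `H`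
is a quotient of `G'` into which `G` embeds (compatibly with `G → G' → H`),
then `scott(G) ≥ scott(H)`. -/
theorem scott_decreases_under_adjoining_roots
    (G : Type) [Group G] [Group.FG G]
    (nn : ℕ) (γ : Fin nn → G) (k : Fin nn → ℕ)
    (hk : ∀ i, 2 ≤ k i)
    (hind : ∀ i, Indivisible (γ i))
    (hconj : ∀ i j, i ≠ j → ¬ IsConj (γ i) (γ j) ∧ ¬ IsConj (γ i) (γ j)⁻¹)
    (H : Type) [Group H]
    (π : AdjoinRoots G γ k →* H) (hπ : Function.Surjective π)
    (ι : G →* H) (hι : Function.Injective ι)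
    (hcomp : π.comp (adjoinRootsIncl G γ k) = ι) :
    ∀ a b a' b', HasScott H a b → HasScott G a' b' →
      ScottLE (a, b) (a', b') := by
  exact scott_decreases_under_adjoining_roots_general G nn γ k
    (fun i => (hind i).not_isOfFinOrder) H π hπ (hcomp ▸ hι)
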